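/- arXiv:1406.0689 — 5 statements merged into one kernel-verified Lean document; each statement's English description precedes it below -/
import Mathlib

section
/- Let b_0 = b_1 = 1 and b_{2k} = b_{2k+1} = (1/4^k)·binomial(2k, k) for k ≥ 1, and let C_n(x) = Σ_{k=0}^{n} (−1)^k b_k cos(kx). Then for every n with 2 ≤ n ≤ 21, n ≠ 6, and every x ∈ (5π/8, π): (820/33)(1 − cos(x/10)) ≤ C_n(x). -/
open Real

noncomputable def b (k : ℕ) : ℝ := (Nat.choose (2*(k/2)) (k/2) : ℝ) / 4^(k/2)

noncomputable def C (n : ℕ) (x : ℝ) : ℝ :=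
  ∑ k ∈ Finset.range (n+1), (-1)^k * b k * cos (k * x)

namespace Vietoris

/-! ### Integer polynomials as coefficient lists, and a positivity checker on `(0,∞)` -/

/-- Evaluation of a coefficient list (lowest degree first). -/
def ev : List ℤ → ℝ → ℝ
  | [], _ => 0
  | c :: p, t => c + t * ev p t

def padd : List ℤ → List ℤ → List ℤ
  | [], q => q
  | p, [] => p
  | a :: p, c :: q => Int.add a c :: padd p q

def psc (a : ℤ) (p : List ℤ) : List ℤ := p.map (fun c => Int.mul a c)

def pmul : List ℤ → List ℤ → List ℤ
  | [], _ => []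
  | a :: p, q => padd (psc a q) (0 :: pmul p q)

/-- coefficients of `c + (t+1) q(t)` -/
def step : List ℤ → ℤ → List ℤ
  | [], c => [c]
  | a :: q, c => Int.add c a :: step q a

/-- `p(t) ↦ p(t+1)` -/
def shift : List ℤ → List ℤ
  | [] => []
  | c :: p => step (shift p) c

def nonneg : ℤ → Bool
  | .ofNat _ => true
  | .negSucc _ => false

def allNonneg : List ℤ → Bool
  | [] => true
  | c :: p => nonneg c && allNonneg p

/-- Descartes-type bisection: sufficient test for nonnegativity on `(0,∞)`. -/
def check : ℕ → List ℤ → Bool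
  | 0, p => allNonneg p
  | f + 1, p => allNonneg p || (check f (shift p) && check f (shift p.reverse))

theorem nonneg_sound (z : ℤ) (h : nonneg z = true) : 0 ≤ z := by
  cases z with
  | ofNat m => exact Int.natCast_nonneg m
  | negSucc m => simp [nonneg] at h

theorem ev_padd (p q : List ℤ) (t : ℝ) : ev (padd p q) t = ev p t + ev q t := by
  induction p generalizing q with
  | nil => simp [padd, ev]
  | cons a p ih =>
    cases q with
    | nil => simp [padd, ev]
    | cons c q =>
      have h : Int.add a c = a + c := rfl
      simp only [padd, ev, ih, h]; push_cast; ring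

theorem ev_psc (a : ℤ) (p : List ℤ) (t : ℝ) : ev (psc a p) t = a * ev p t := by
  induction p with
  | nil => simp [psc, ev]
  | cons c p ih =>
    have h : psc a (c :: p) = (a * c) :: psc a p := rfl
    rw [h]; simp only [ev, ih]; push_cast; ring

theorem ev_pmul (p q : List ℤ) (t : ℝ) : ev (pmul p q) t = ev p t * ev q t := by
  induction p with
  | nil => simp [pmul, ev]
  | cons c p ih => simp only [pmul, ev, ev_padd, ev_psc, ih]; push_cast; ring

theorem ev_step (q : List ℤ) (c : ℤ) (t : ℝ) : ev (step q c) t = c + (t + 1) * ev q t := by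
  induction q generalizing c with
  | nil => simp [step, ev]
  | cons a q ih =>
    have h : Int.add c a = c + a := rfl
    simp only [step, ev, ih, h]; push_cast; ring

theorem ev_shift (p : List ℤ) (t : ℝ) : ev (shift p) t = ev p (t + 1) := by
  induction p with
  | nil => simp [shift, ev]
  | cons c p ih => simp only [shift, ev, ev_step, ih]

theorem ev_append (p : List ℤ) (c : ℤ) (t : ℝ) : ev (p ++ [c]) t = ev p t + c * t ^ p.length := by
  induction p with
  | nil => simp [ev]
  | cons a p ih =>
    simp only [List.cons_append, ev, ih, List.length_cons, pow_succ]; ring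

theorem ev_reverse (p : List ℤ) (u : ℝ) (hu : u ≠ 0) :
    u ^ p.length * ev p.reverse u⁻¹ = u * ev p u := by
  induction p with
  | nil => simp [ev]
  | cons c p ih =>
    have h : u ^ p.length * u⁻¹ ^ p.length = 1 := by
      rw [← mul_pow, mul_inv_cancel₀ hu, one_pow]
    simp only [List.reverse_cons, ev_append, List.length_reverse, List.length_cons, ev, pow_succ]
    linear_combination u * ih + u * c * h

theorem allNonneg_sound (p : List ℤ) (h : allNonneg p = true) (u : ℝ) (hu : 0 ≤ u) :
    0 ≤ ev p u := by
  induction p with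
  | nil => simp [ev]
  | cons c p ih =>
    simp only [allNonneg, Bool.and_eq_true] at h
    have h1 : (0 : ℝ) ≤ c := by exact_mod_cast nonneg_sound c h.1
    have h2 := ih h.2
    simp only [ev]
    positivity

theorem ev_nonneg_of_reverse (p : List ℤ) (u : ℝ) (hu : 0 < u) (h : 0 ≤ ev p.reverse u⁻¹) :
    0 ≤ ev p u := by
  have h1 := ev_reverse p u hu.ne'
  have h2 : 0 ≤ u * ev p u := by rw [← h1]; positivity
  exact nonneg_of_mul_nonneg_right h2 hu

theorem check_sound (f : ℕ) (p : List ℤ) (h : check f p = true) (u : ℝ) (hu : 0 < u) :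
    0 ≤ ev p u := by
  induction f generalizing p u with
  | zero => exact allNonneg_sound p h u hu.le
  | succ f ih =>
    simp only [check, Bool.or_eq_true, Bool.and_eq_true] at h
    rcases h with h | ⟨ha, hb⟩
    · exact allNonneg_sound p h u hu.le
    · have above : ∀ v : ℝ, 1 < v → 0 ≤ ev p v := by
        intro v hv
        have := ih _ ha (v - 1) (by linarith)
        rw [ev_shift] at this
        simpa using this
      rcases lt_trichotomy u 1 with h | h | h
      · apply ev_nonneg_of_reverse p u hu
        have h1 : 1 < u⁻¹ := (one_lt_inv₀ hu).2 h
        have := ih _ hb (u⁻¹ - 1) (by linarith)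
        rw [ev_shift] at this
        simpa using this
      · subst h
        have hc : Continuous (ev p) := by
          clear ih ha hb above
          induction p with
          | nil => exact continuous_const
          | cons c p ih => exact continuous_const.add (continuous_id.mul ih)
        refine ge_of_tendsto (hc.continuousAt.tendsto.mono_left
          (nhdsWithin_le_nhds (s := Set.Ioi 1))) ?_
        filter_upwards [self_mem_nhdsWithin] with v hv using above v hv
      · exact above u h

/-! ### The concrete polynomials -/

def K : ℤ := 75000 * 2 ^ 20
def D : ℤ := 4 ^ 10 * 128 ^ 21

def Wp : List ℤ := [23562 * 2 ^ 20, -(15000 * 9 * 16 ^ 4), 0, -(2500 * 729 * 256), 0, -(1125 * 9 ^ 5)]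

def Fp : List ℤ :=
  padd (padd (psc (12 * K ^ 2) (pmul Wp Wp)) (psc (-1) (pmul (pmul Wp Wp) (pmul Wp Wp))))
    [3 * 75000 ^ 3 * 2 ^ 80]

/-- `(E_k, E_{k+1})` with `E_k(t) = 128^k T_k(1 - 81 t^2/128)`. -/
def Ep : ℕ → List ℤ × List ℤ
  | 0 => ([1], [128, 0, -81])
  | k + 1 => ((Ep k).2, padd (pmul [256, 0, -162] (Ep k).2) (psc (-16384) (Ep k).1))

def Bz (k : ℕ) : ℤ := (Nat.choose (2*(k/2)) (k/2) : ℤ) * 4 ^ (10 - k/2)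

def Sp : ℕ → List ℤ
  | 0 => psc (Bz 0 * 128 ^ 21) (Ep 0).1
  | n + 1 => padd (Sp n) (psc (Bz (n + 1) * 128 ^ (21 - (n + 1))) (Ep (n + 1)).1)

/-- The polynomial whose nonnegativity on `(0,1)` is the claim. -/
def Gp (n : ℕ) : List ℤ := padd (psc (792 * K ^ 4) (Sp n)) (psc (-820 * D) Fp)

theorem check_G : ∀ n : Fin 22, 2 ≤ n.1 → n.1 ≠ 6 →
    check 6 (shift (Gp n.1).reverse) = true := by
  decide +kernel

theorem G_nonneg (n : ℕ) (h2 : 2 ≤ n) (h21 : n ≤ 21) (h6 : n ≠ 6) (t : ℝ) (h0 : 0 < t)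
    (h1 : t < 1) : 0 ≤ ev (Gp n) t := by
  apply ev_nonneg_of_reverse _ t h0
  have h := check_sound _ _ (check_G ⟨n, by omega⟩ h2 h6) (t⁻¹ - 1)
    (by linarith [(one_lt_inv₀ h0).2 h1])
  rw [ev_shift] at h
  simpa using h

/-! ### Meaning of the polynomials -/

theorem ev_Ep (k : ℕ) (t y : ℝ) (hy : 128 * cos y = 128 - 81 * t ^ 2) :
    ev (Ep k).1 t = 128 ^ k * cos (k * y) ∧
      ev (Ep k).2 t = 128 ^ (k + 1) * cos ((k + 1 : ℕ) * y) := by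
  induction k with
  | zero =>
    constructor
    · simp [Ep, ev]
    · simp only [Ep, ev]; push_cast; simp only [zero_add, pow_one, one_mul]; linarith
  | succ k ih =>
    refine ⟨ih.2, ?_⟩
    simp only [Ep, ev_padd, ev_pmul, ev_psc, ih.1, ih.2]
    have h1 : cos ((k + 1 + 1 : ℕ) * y) = 2 * cos y * cos ((k + 1 : ℕ) * y) - cos (k * y) := by
      have e1 : ((k + 1 + 1 : ℕ) : ℝ) * y = (k + 1 : ℕ) * y + y := by push_cast; ring
      have e2 : (k : ℝ) * y = (k + 1 : ℕ) * y - y := by push_cast; ring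
      rw [e1, e2, cos_add, cos_sub]; ring
    rw [h1]
    simp only [ev]
    push_cast
    simp only [pow_succ]
    linear_combination (-2 * 128 ^ k * 128 * cos (((k : ℝ) + 1) * y)) * hy

theorem Bz_eq (k : ℕ) (hk : k ≤ 21) : (Bz k : ℝ) = 4 ^ 10 * b k := by
  unfold Bz b
  push_cast
  have h : (4 : ℝ) ^ 10 = 4 ^ (10 - k / 2) * 4 ^ (k / 2) := by
    rw [← pow_add]; congr 1; omega
  rw [h]
  have : (4 : ℝ) ^ (k / 2) ≠ 0 := by positivity
  field_simp

theorem ev_Sp (n : ℕ) (hn : n ≤ 21) (t y : ℝ) (hy : 128 * cos y = 128 - 81 * t ^ 2) :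
    ev (Sp n) t = 4 ^ 10 * 128 ^ 21 * ∑ k ∈ Finset.range (n + 1), b k * cos (k * y) := by
  induction n with
  | zero =>
    have := Bz_eq 0 (by norm_num)
    simp only [Sp, ev_psc, (ev_Ep 0 t y hy).1]
    push_cast
    rw [this]
    simp
    ring
  | succ n ih =>
    rw [Finset.sum_range_succ]
    simp only [Sp, ev_padd, ev_psc, (ev_Ep (n + 1) t y hy).1, ih (by omega)]
    push_cast
    rw [Bz_eq _ hn]
    have h : (128 : ℝ) ^ 21 = 128 ^ (20 - n) * 128 ^ (n + 1) := by
      rw [← pow_add]; congr 1; omega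
    linear_combination (-(4 ^ 10 * b (n + 1) * cos (((n : ℝ) + 1) * y))) * h

theorem ev_Wp (t : ℝ) : ev Wp t = (75000 * 2 ^ 20) *
    ((3.1416 - 2 * ((9 * t / 16) + (9 * t / 16) ^ 3 / 6 + 3 * (9 * t / 16) ^ 5 / 40)) / 10) := by
  simp only [Wp, ev]; push_cast; ring

theorem C_lower (n : ℕ) (h2 : 2 ≤ n) (h21 : n ≤ 21) (h6 : n ≠ 6) (t y w : ℝ) (h0 : 0 < t)
    (h1 : t < 1) (hy : 128 * cos y = 128 - 81 * t ^ 2)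
    (hw : w = (3.1416 - 2 * ((9 * t / 16) + (9 * t / 16) ^ 3 / 6
      + 3 * (9 * t / 16) ^ 5 / 40)) / 10) :
    820 / 33 * (w ^ 2 / 2 - w ^ 4 / 24 + 1 / 600000) ≤
      ∑ k ∈ Finset.range (n + 1), b k * cos (k * y) := by
  have h := G_nonneg n h2 h21 h6 t h0 h1
  simp only [Gp, Fp, ev_padd, ev_psc, ev_pmul, ev_Sp n h21 t y hy, ev_Wp, ← hw] at h
  simp only [K, D, ev] at h
  push_cast at h
  generalize (∑ k ∈ Finset.range (n + 1), b k * cos (k * y)) = S at h ⊢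
  have e : (0 : ℝ) < 792 * (75000 * 2 ^ 20) ^ 4 * (4 ^ 10 * 128 ^ 21) := by positivity
  refine le_of_mul_le_mul_left ?_ e
  linarith

/-! ### Analytic estimates -/

theorem nonneg_of_deriv {f f' : ℝ → ℝ} {B : ℝ} (hf : ∀ x, HasDerivAt f (f' x) x) (h0 : f 0 = 0)
    (h : ∀ x, 0 ≤ x → x ≤ B → 0 ≤ f' x) (x : ℝ) (hx : 0 ≤ x) (hB : x ≤ B) : 0 ≤ f x := by
  have hm : MonotoneOn f (Set.Icc 0 B) := by
    apply monotoneOn_of_deriv_nonneg (convex_Icc 0 B)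
    · exact fun z _ => (hf z).continuousAt.continuousWithinAt
    · exact fun z _ => (hf z).differentiableAt.differentiableWithinAt
    · intro z hz
      rw [interior_Icc] at hz
      rw [(hf z).deriv]
      exact h z hz.1.le hz.2.le
  have := hm ⟨le_rfl, hx.trans hB⟩ ⟨hx, hB⟩ hx
  rwa [h0] at this

theorem cos_le4 (x : ℝ) (hx : 0 ≤ x) : 0 ≤ 1 - x ^ 2 / 2 + x ^ 4 / 24 - cos x := by
  refine nonneg_of_deriv (B := x) (f := fun x => 1 - x ^ 2 / 2 + x ^ 4 / 24 - cos x)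
    (f' := fun x => sin x - (x - x ^ 3 / 6)) ?_ (by simp) ?_ x hx le_rfl
  · intro z
    have := (((hasDerivAt_const z (1 : ℝ)).sub ((hasDerivAt_pow 2 z).div_const 2)).add
      ((hasDerivAt_pow 4 z).div_const 24)).sub (hasDerivAt_cos z)
    refine this.congr_deriv ?_
    norm_num
    try ring
  · intro z hz _
    linarith [sin_ge_sub_cube hz]

theorem sin_le5 (x : ℝ) (hx : 0 ≤ x) : 0 ≤ x - x ^ 3 / 6 + x ^ 5 / 120 - sin x := by
  refine nonneg_of_deriv (B := x) (f := fun x => x - x ^ 3 / 6 + x ^ 5 / 120 - sin x)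
    (f' := fun x => 1 - x ^ 2 / 2 + x ^ 4 / 24 - cos x) ?_ (by simp) ?_ x hx le_rfl
  · intro z
    have := (((hasDerivAt_id z).sub ((hasDerivAt_pow 3 z).div_const 6)).add
      ((hasDerivAt_pow 5 z).div_const 120)).sub (hasDerivAt_sin z)
    refine this.congr_deriv ?_
    norm_num
    try ring
  · exact fun z hz _ => cos_le4 z hz

theorem cos_ge6 (x : ℝ) (hx : 0 ≤ x) :
    0 ≤ cos x - (1 - x ^ 2 / 2 + x ^ 4 / 24 - x ^ 6 / 720) := by
  refine nonneg_of_deriv (B := x)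
    (f := fun x => cos x - (1 - x ^ 2 / 2 + x ^ 4 / 24 - x ^ 6 / 720))
    (f' := fun x => x - x ^ 3 / 6 + x ^ 5 / 120 - sin x) ?_ (by simp) ?_ x hx le_rfl
  · intro z
    have := (hasDerivAt_cos z).sub ((((hasDerivAt_const z (1 : ℝ)).sub
      ((hasDerivAt_pow 2 z).div_const 2)).add
      ((hasDerivAt_pow 4 z).div_const 24)).sub ((hasDerivAt_pow 6 z).div_const 720))
    refine this.congr_deriv ?_
    norm_num
    try ring
  · exact fun z hz _ => sin_le5 z hz

theorem arcsin_type (v : ℝ) (hv : 0 ≤ v) (hv2 : v ≤ π / 2) :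
    0 ≤ v - (sin v + sin v ^ 3 / 6 + 3 * sin v ^ 5 / 40) := by
  refine nonneg_of_deriv (B := π / 2)
    (f := fun v => v - (sin v + sin v ^ 3 / 6 + 3 * sin v ^ 5 / 40))
    (f' := fun v => 1 - cos v * (1 + sin v ^ 2 / 2 + 3 * sin v ^ 4 / 8)) ?_ (by simp) ?_ v hv hv2
  · intro z
    have := (hasDerivAt_id z).sub (((hasDerivAt_sin z).add
      (((hasDerivAt_sin z).pow 3).div_const 6)).add
      ((((hasDerivAt_sin z).pow 5).const_mul 3).div_const 40))
    refine this.congr_deriv ?_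
    norm_num
    try ring
  · intro z hz hz2
    have hc : 0 ≤ cos z := cos_nonneg_of_mem_Icc ⟨by linarith [pi_pos], hz2⟩
    have hs := sin_sq_add_cos_sq z
    have h4 : sin z ^ 4 = (sin z ^ 2) ^ 2 := by ring
    rw [h4]
    have hu : 0 ≤ sin z ^ 2 := sq_nonneg _
    generalize sin z ^ 2 = u at *
    have hsq : (cos z * (1 + u / 2 + 3 * u ^ 2 / 8)) ^ 2 ≤ 1 ^ 2 := by
      have : (cos z * (1 + u / 2 + 3 * u ^ 2 / 8)) ^ 2 =
          1 - u ^ 3 * (40 + 15 * u + 9 * u ^ 2) / 64 := by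
        rw [mul_pow, show cos z ^ 2 = 1 - u by linarith]; ring
      rw [this]
      have : 0 ≤ u ^ 3 * (40 + 15 * u + 9 * u ^ 2) / 64 := by positivity
      linarith
    have := abs_le_of_sq_le_sq' hsq zero_le_one
    linarith [this.2]

theorem one_sub_cos_le (v w : ℝ) (hv : 0 ≤ v) (hvw : v ≤ w) (hw : w ≤ 0.31416) :
    1 - cos v ≤ w ^ 2 / 2 - w ^ 4 / 24 + 1 / 600000 := by
  have h := cos_ge6 v hv
  have h6 : v ^ 6 ≤ 0.31416 ^ 6 := by gcongr; linarith
  have hm : v ^ 2 / 2 - v ^ 4 / 24 ≤ w ^ 2 / 2 - w ^ 4 / 24 := by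
    have a1 : v ^ 2 ≤ w ^ 2 := by gcongr
    have a2 : w ^ 2 ≤ 0.31416 ^ 2 := by gcongr; linarith
    have : 0 ≤ (w ^ 2 - v ^ 2) * (12 - w ^ 2 - v ^ 2) := by
      apply mul_nonneg <;> norm_num at * <;> linarith
    nlinarith
  norm_num at h6
  linarith

end Vietoris

open Vietoris in
theorem lemma7 : ∀ n : ℕ, 2 ≤ n → n ≤ 21 → n ≠ 6 →
    ∀ x ∈ Set.Ioo (5 * π / 8) π,
      (820/33) * (1 - cos (x/10)) ≤ C n x := by
  intro n h2 h21 h6 x hx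
  obtain ⟨hx1, hx2⟩ := hx
  have hpi := pi_lt_d4
  set y := π - x with hy
  have hy0 : 0 < y := by linarith
  have hy1 : y < 3 * π / 8 := by linarith
  -- rewrite the cosine polynomial
  have hC : C n x = ∑ k ∈ Finset.range (n + 1), b k * cos (k * y) := by
    unfold C
    refine Finset.sum_congr rfl fun k _ => ?_
    have e : (k : ℝ) * x = k * π - k * y := by rw [hy]; ring
    rw [e, cos_nat_mul_pi_sub]
    have : ((-1 : ℝ) ^ k) * (-1) ^ k = 1 := by rw [← mul_pow]; norm_num
    linear_combination (b k * cos (k * y)) * this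
  have hs0 : 0 < sin (y / 2) := sin_pos_of_pos_of_lt_pi (by linarith) (by linarith [pi_pos])
  have hcs : cos y = 1 - 2 * sin (y / 2) ^ 2 := by
    rw [← cos_sq_add_sin_sq (y / 2)]
    have : cos y = cos (2 * (y / 2)) := by congr 1; ring
    rw [this, cos_two_mul']; ring
  have hs1 : sin (y / 2) < 9 / 16 := by
    have hc : cos (3 * π / 8) < cos y :=
      cos_lt_cos_of_nonneg_of_le_pi hy0.le (by linarith [pi_pos]) hy1
    have hc2 : cos (3 * π / 8) = √(2 - √2) / 2 := by
      rw [← sin_pi_div_eight, ← cos_pi_div_two_sub]; congr 1; ring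
    have hc3 : (0.76 : ℝ) ≤ √(2 - √2) := by
      apply le_sqrt_of_sq_le
      have : √2 ≤ 1.4143 := by rw [sqrt_le_iff]; norm_num
      norm_num at *; linarith
    by_contra hcon
    push Not at hcon
    have : (9 / 16 : ℝ) ^ 2 ≤ sin (y / 2) ^ 2 := by gcongr
    norm_num at *
    linarith
  obtain ⟨t, ht⟩ : ∃ t, t = 16 / 9 * sin (y / 2) := ⟨_, rfl⟩
  have hst : sin (y / 2) = 9 * t / 16 := by rw [ht]; ring
  have hv := arcsin_type (y / 2) (by linarith) (by linarith [pi_pos])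
  rw [hst] at hv hcs hs0 hs1
  have ht0 : 0 < t := by linarith
  have key := C_lower n h2 h21 h6 t y _ ht0 (by linarith) (by rw [hcs]; ring) rfl
  rw [hC]
  refine le_trans ?_ key
  refine mul_le_mul_of_nonneg_left ?_ (by norm_num)
  apply one_sub_cos_le
  · linarith [pi_pos]
  · linarith
  · have : 0 ≤ 2 * ((9 * t / 16) + (9 * t / 16) ^ 3 / 6 + 3 * (9 * t / 16) ^ 5 / 40) := by
      positivity
    norm_num at *
    linarith
end

section
/- Let b_k be the Vietoris coefficients (b_{2k} = b_{2k+1} = 4^{−k}·binomial(2k,k)) and Δ(x) = Σ_{k=0}^{21} (−1)^k (b_k − b_{22}) cos(kx) − (820/33)(1 − cos(x/10)). Then Δ(x) > 0.29 for all x ∈ [5π/8, 2.68]. -/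
open Real

noncomputable def Δ (x : ℝ) : ℝ :=
  (∑ k ∈ Finset.range 22, (-1)^k * (b k - b 22) * cos (k * x))
    - (820/33) * (1 - cos (x/10))

namespace VietorisAux

/-! ### Taylor bounds for cosine -/

/-- Taylor partial sums of cosine. -/
noncomputable def cT (n : ℕ) (x : ℝ) : ℝ :=
  ∑ k ∈ Finset.range n, (-1) ^ k * x ^ (2 * k) / ((2 * k).factorial : ℝ)

/-- Taylor partial sums of sine. -/
noncomputable def sT (n : ℕ) (x : ℝ) : ℝ :=
  ∑ k ∈ Finset.range n, (-1) ^ k * x ^ (2 * k + 1) / ((2 * k + 1).factorial : ℝ)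

lemma hasDerivAt_sT (n : ℕ) (x : ℝ) : HasDerivAt (sT n) (cT n x) x := by
  unfold sT cT
  apply HasDerivAt.fun_sum
  intro k _
  have h := (((hasDerivAt_pow (2 * k + 1) x).const_mul ((-1 : ℝ) ^ k)).div_const
    ((2 * k + 1).factorial : ℝ))
  refine h.congr_deriv ?_
  rw [Nat.factorial_succ (2 * k)]
  have : ((2 * k).factorial : ℝ) ≠ 0 := by positivity
  have h2 : (2 * (k : ℝ) + 1) ≠ 0 := by positivity
  push_cast
  field_simp

lemma hasDerivAt_cT (n : ℕ) (x : ℝ) : HasDerivAt (cT (n + 1)) (-sT n x) x := by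
  have e : cT (n + 1) = fun x => (∑ k ∈ Finset.range n,
      (-1) ^ (k + 1) * x ^ (2 * k + 2) / ((2 * k + 2).factorial : ℝ)) + 1 := by
    funext x
    unfold cT
    rw [Finset.sum_range_succ']
    simp [mul_add]
  rw [e]
  apply HasDerivAt.add_const
  unfold sT
  rw [← Finset.sum_neg_distrib]
  apply HasDerivAt.fun_sum
  intro k _
  have h := (((hasDerivAt_pow (2 * k + 2) x).const_mul ((-1 : ℝ) ^ (k + 1))).div_const
    ((2 * k + 2).factorial : ℝ))
  refine h.congr_deriv ?_
  rw [Nat.factorial_succ (2 * k + 1)]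
  have : ((2 * k + 1).factorial : ℝ) ≠ 0 := by positivity
  have h2 : (2 * (k : ℝ) + 1 + 1) ≠ 0 := by positivity
  have h3 : 2 * k + 2 - 1 = 2 * k + 1 := by omega
  rw [h3]
  push_cast
  field_simp
  ring

lemma nonneg_of_deriv {f f' : ℝ → ℝ} (h0 : f 0 = 0) (hd : ∀ x, HasDerivAt f (f' x) x)
    (hf' : ∀ x, 0 ≤ x → 0 ≤ f' x) (x : ℝ) (hx : 0 ≤ x) : 0 ≤ f x := by
  have hm : MonotoneOn f (Set.Ici 0) := by
    apply monotoneOn_of_hasDerivWithinAt_nonneg (f' := f') (convex_Ici 0)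
    · exact fun y _ => (hd y).continuousAt.continuousWithinAt
    · exact fun y _ => (hd y).hasDerivWithinAt
    · intro y hy
      rw [interior_Ici] at hy
      exact hf' y (le_of_lt hy)
  have := hm (Set.mem_Ici.2 le_rfl) (Set.mem_Ici.2 hx) hx
  rwa [h0] at this

lemma taylor (n : ℕ) : ∀ x : ℝ, 0 ≤ x → 0 ≤ (-1) ^ (n + 1) * (cos x - cT (n + 1) x) := by
  have step : ∀ m : ℕ, (∀ x : ℝ, 0 ≤ x → 0 ≤ (-1) ^ (m + 1) * (cos x - cT (m + 1) x)) →
      ∀ x : ℝ, 0 ≤ x → 0 ≤ (-1) ^ (m + 1) * (sin x - sT (m + 1) x) := by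
    intro m hm
    apply nonneg_of_deriv (f' := fun x => (-1) ^ (m + 1) * (cos x - cT (m + 1) x))
    · simp [sT]
    · intro x
      exact ((hasDerivAt_sin x).sub (hasDerivAt_sT (m + 1) x)).const_mul _
    · exact hm
  induction n with
  | zero =>
    intro x _
    simp [cT, cos_le_one]
  | succ m ih =>
    apply nonneg_of_deriv (f' := fun x => (-1) ^ (m + 1 + 1) * (-sin x - -sT (m + 1) x))
    · simp [cT, Finset.sum_range_succ']
    · intro x
      exact ((hasDerivAt_cos x).sub (hasDerivAt_cT (m + 1) x)).const_mul _
    · intro x hx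
      have := step m ih x hx
      have e : (-1 : ℝ) ^ (m + 1 + 1) * (-sin x - -sT (m + 1) x)
        = (-1) ^ (m + 1) * (sin x - sT (m + 1) x) := by ring
      show 0 ≤ (-1 : ℝ) ^ (m + 1 + 1) * (-sin x - -sT (m + 1) x)
      rw [e]
      exact this

lemma cos_upper (x : ℝ) (hx : 0 ≤ x) : cos x ≤ cT 9 x := by
  have := taylor 8 x hx
  norm_num at this
  linarith

lemma cos_lower (x : ℝ) (hx : 0 ≤ x) : cT 8 x ≤ cos x := by
  have := taylor 7 x hx
  norm_num at this
  linarith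

/-! ### Rational polynomials as lists and a positivity test -/

/-- Evaluation of a coefficient list. -/
def ev : List ℚ → ℝ → ℝ
  | [], _ => 0
  | c :: cs, x => (c : ℝ) + x * ev cs x

/-- Sum of polynomials. -/
def padd : List ℚ → List ℚ → List ℚ
  | [], l => l
  | c :: cs, [] => c :: cs
  | c :: cs, d :: ds => (c + d) :: padd cs ds

/-- Scalar multiple. -/
def smul (a : ℚ) : List ℚ → List ℚ
  | [] => []
  | c :: cs => (a * c) :: smul a cs

/-- Multiplication by `a + X` followed by adding the constant `p`. -/
def step (a p : ℚ) : List ℚ → List ℚ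
  | [] => [p]
  | r :: rs => (a * r + p) :: step a r rs

/-- Taylor shift. -/
def shift (a : ℚ) : List ℚ → List ℚ
  | [] => []
  | c :: cs => step a c (shift a cs)

/-- Lower bound on the interval from zero to `w`. -/
def low (w : ℚ) : List ℚ → ℚ
  | [] => 0
  | c :: cs => c + if 0 ≤ low w cs then 0 else w * low w cs

lemma ev_add (l m : List ℚ) (x : ℝ) : ev (padd l m) x = ev l x + ev m x := by
  induction l generalizing m with
  | nil => simp [padd, ev]
  | cons c cs ih =>
    cases m with
    | nil => simp [padd, ev]
    | cons d ds =>
      simp only [padd, ev, ih]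
      push_cast
      ring

lemma ev_smul (a : ℚ) (l : List ℚ) (x : ℝ) : ev (smul a l) x = a * ev l x := by
  induction l with
  | nil => simp [smul, ev]
  | cons c cs ih =>
    simp only [smul, ev, ih]
    push_cast
    ring

lemma ev_step (a p : ℚ) (l : List ℚ) (x : ℝ) :
    ev (step a p l) x = p + (a + x) * ev l x := by
  induction l generalizing p with
  | nil => simp [step, ev]
  | cons r rs ih =>
    simp only [step, ev, ih]
    push_cast
    ring

lemma ev_shift (a : ℚ) (l : List ℚ) (x : ℝ) : ev (shift a l) x = ev l (a + x) := by
  induction l with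
  | nil => simp [shift, ev]
  | cons c cs ih =>
    simp only [shift, ev_step, ev, ih]

lemma low_le (w : ℚ) (l : List ℚ) (x : ℝ) (h0 : 0 ≤ x) (hw : x ≤ w) :
    (low w l : ℝ) ≤ ev l x := by
  induction l with
  | nil => simp [low, ev]
  | cons c cs ih =>
    simp only [low, ev, Rat.cast_add]
    have h1 : x * (low w cs : ℝ) ≤ x * ev cs x := mul_le_mul_of_nonneg_left ih h0
    split_ifs with h
    · have h2 : (0 : ℝ) ≤ (low w cs : ℝ) := by exact_mod_cast h
      have := mul_nonneg h0 h2
      push_cast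
      linarith
    · have h2 : (low w cs : ℝ) ≤ 0 := by exact_mod_cast (not_le.1 h).le
      have := mul_le_mul_of_nonpos_right hw h2
      push_cast
      linarith

lemma ev_pos (l : List ℚ) (a c : ℚ) (h : 0 < low (c - a) (shift a l)) (s : ℝ)
    (h1 : (a : ℝ) ≤ s) (h2 : s ≤ c) : 0 < ev l s := by
  have h3 := low_le (c - a) (shift a l) (s - a) (by linarith) (by push_cast; linarith)
  rw [ev_shift] at h3
  have h4 : (0 : ℝ) < (low (c - a) (shift a l) : ℝ) := by exact_mod_cast h
  have h5 : (a : ℝ) + (s - a) = s := by ring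
  rw [h5] at h3
  linarith

/-! ### The cosine sum as a polynomial -/

/-- Consecutive Chebyshev polynomials as coefficient lists. -/
def cheb : ℕ → List ℚ × List ℚ
  | 0 => ([1], [0, 1])
  | n + 1 => ((cheb n).2, padd (smul 2 (0 :: (cheb n).2)) (smul (-1) (cheb n).1))

lemma ev_cheb (u : ℝ) (n : ℕ) :
    ev (cheb n).1 (cos u) = cos (n * u) ∧ ev (cheb n).2 (cos u) = cos ((n + 1 : ℕ) * u) := by
  induction n with
  | zero => simp [cheb, ev]
  | succ m ih =>
    refine ⟨ih.2, ?_⟩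
    simp only [cheb, ev_add, ev_smul, ev, ih.1, ih.2]
    have e1 : (((m + 1 + 1 : ℕ)) : ℝ) * u = ((m + 1 : ℕ) : ℝ) * u + u := by push_cast; ring
    have e2 : ((m : ℕ) : ℝ) * u = ((m + 1 : ℕ) : ℝ) * u - u := by push_cast; ring
    rw [e1, e2, cos_add, cos_sub]
    push_cast
    ring

/-- The Vietoris coefficients as rationals. -/
def bq (k : ℕ) : ℚ := (Nat.choose (2*(k/2)) (k/2) : ℚ) / 4^(k/2)

lemma bq_cast (k : ℕ) : ((bq k : ℚ) : ℝ) = b k := by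
  simp [bq, b]

/-- The polynomial of the cosine sum in `cos (π - x)`. -/
def vp : ℕ → List ℚ
  | 0 => []
  | n + 1 => padd (vp n) (smul (bq n - bq 22) (cheb n).1)

lemma ev_vp (x : ℝ) (n : ℕ) :
    ev (vp n) (-cos x) = ∑ k ∈ Finset.range n, (-1)^k * (b k - b 22) * cos (k * x) := by
  induction n with
  | zero => simp [vp, ev]
  | succ m ih =>
    rw [Finset.sum_range_succ, ← ih]
    simp only [vp, ev_add, ev_smul]
    have h := (ev_cheb (π - x) m).1
    rw [cos_pi_sub] at h
    have h2 : cos (m * (π - x)) = (-1) ^ m * cos (m * x) := by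
      rw [mul_sub, cos_sub, cos_nat_mul_pi, sin_nat_mul_pi]
      ring
    rw [h, h2]
    push_cast
    rw [bq_cast, bq_cast]
    ring

/-- Explicit coefficients of the polynomial. -/
def vl : List ℚ :=
  [327615/524288, 207897/524288, -(95259/262144), -(237799/65536),
    1170829/65536, 3139601/32768, -(1100661/4096), -(282931/256),
    8348771/4096, 14233447/2048, -(9007807/1024), -(6670957/256),
    2934853/128, 1945963/32, -(73463/2), -(178113/2),
    565513/16, 636233/8, -(74919/4), -(39559/1),
    4199/1, 8398/1]

lemma vp_eq : vp 22 = vl := by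
  norm_num [vp, vl, cheb, padd, smul, bq, Nat.choose]

/-! ### The elementary estimate on one piece -/

lemma concave_aux (α β p q x : ℝ) (hβ : 0 ≤ β) (hp : π / 2 ≤ p) (hq : q ≤ π)
    (hpx : p ≤ x) (hxq : x ≤ q)
    (h1 : 1 - cos (p / 10) ≤ α - β * cos p) (h2 : 1 - cos (q / 10) ≤ α - β * cos q) :
    1 - cos (x / 10) ≤ α - β * cos x := by
  have hpi := pi_pos
  have hc : ConcaveOn ℝ (Set.Icc (-(π/2)) (π/2)) cos := strictConcaveOn_cos_Icc.concaveOn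
  rcases eq_or_lt_of_le (hpx.trans hxq) with h | h
  · have : x = p := by linarith
    rw [this]; exact h1
  set t := (x - p) / (q - p) with ht
  have hqp : 0 < q - p := by linarith
  have ht0 : 0 ≤ t := div_nonneg (by linarith) hqp.le
  have ht1 : 0 ≤ 1 - t := by
    rw [ht, sub_nonneg, div_le_one hqp]; linarith
  have hx : x = (1 - t) * p + t * q := by
    have : t * (q - p) = x - p := by rw [ht]; field_simp
    linarith
  have e1 := hc.2 (x := p / 10) (y := q / 10) ⟨by linarith, by linarith⟩
    ⟨by linarith, by linarith⟩ ht1 ht0 (by ring)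
  have e2 := hc.2 (x := π - p) (y := π - q) ⟨by linarith, by linarith⟩
    ⟨by linarith, by linarith⟩ ht1 ht0 (by ring)
  simp only [smul_eq_mul, cos_pi_sub] at e1 e2
  have f1 : (1 - t) * (p / 10) + t * (q / 10) = x / 10 := by rw [hx]; ring
  have f2 : (1 - t) * (π - p) + t * (π - q) = π - x := by rw [hx]; ring
  rw [f1] at e1
  rw [f2, cos_pi_sub] at e2
  have g1 := mul_le_mul_of_nonneg_left h1 ht1
  have g2 := mul_le_mul_of_nonneg_left h2 ht0
  have g3 := mul_le_mul_of_nonneg_left e2 hβ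
  nlinarith

/-- The polynomial to be tested on a piece with secant data `α`, `β`. -/
def tp (α β : ℚ) : List ℚ :=
  padd vl [-(29/100) - 820/33 * α, -(820/33 * β)]

lemma delta_gt (α β : ℚ) (x : ℝ) (h : 1 - cos (x / 10) ≤ α - β * cos x)
    (hp : 0 < ev (tp α β) (-cos x)) : Δ x > 0.29 := by
  rw [tp, ev_add, ← vp_eq, ev_vp] at hp
  simp only [ev] at hp
  push_cast at hp
  unfold Δ
  norm_num at hp ⊢
  linarith

lemma node (p : ℝ) (hp : 0 ≤ p) (α β : ℝ) (hβ : 0 ≤ β)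
    (h : 1 - cT 8 (p / 10) ≤ α - β * cT 9 p) : 1 - cos (p / 10) ≤ α - β * cos p := by
  have h1 := cos_lower (p / 10) (by positivity)
  have h2 := mul_le_mul_of_nonneg_left (cos_upper p hp) hβ
  linarith

lemma range (p q x lo hi : ℝ) (hp : 0 ≤ p) (hq : q ≤ π) (hpx : p ≤ x) (hxq : x ≤ q)
    (h1 : cT 9 p ≤ -lo) (h2 : -hi ≤ cT 8 q) : lo ≤ -cos x ∧ -cos x ≤ hi := by
  have a1 := cos_le_cos_of_nonneg_of_le_pi hp (hxq.trans hq) hpx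
  have a2 := cos_le_cos_of_nonneg_of_le_pi (hp.trans hpx) hq hxq
  have a3 := cos_upper p hp
  have a4 := cos_lower q (by linarith)
  constructor <;> linarith

lemma piece1 (x : ℝ) (h1 : (9817/5000) ≤ x) (h2 : x ≤ (21/10)) : Δ x > 0.29 := by
  have hpi := pi_gt_d2
  have hpi2 := pi_lt_d2
  have hr := range (9817/5000) (21/10) x (191/500) (101/200) (by norm_num) (by linarith) h1 h2
    (by norm_num [cT, Finset.sum_range_succ, Nat.factorial])
    (by norm_num [cT, Finset.sum_range_succ, Nat.factorial])
  apply delta_gt (53/5000) (451/20000) x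
  · push_cast
    apply concave_aux _ _ (9817/5000) (21/10) x (by norm_num) (by linarith) (by linarith) h1 h2
    · exact node _ (by norm_num) _ _ (by norm_num)
        (by norm_num [cT, Finset.sum_range_succ, Nat.factorial])
    · exact node _ (by norm_num) _ _ (by norm_num)
        (by norm_num [cT, Finset.sum_range_succ, Nat.factorial])
  · rcases le_total (-cos x) (887/2000) with h | h
    · exact ev_pos _ (191/500) (887/2000) (by norm_num [tp, vl, padd, shift, step, low]) _ (by push_cast; exact hr.1)
        (by push_cast; exact h)
    · exact ev_pos _ (887/2000) (101/200) (by norm_num [tp, vl, padd, shift, step, low]) _ (by push_cast; exact h)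
        (by push_cast; exact hr.2)

lemma piece2 (x : ℝ) (h1 : (21/10) ≤ x) (h2 : x ≤ (9/4)) : Δ x > 0.29 := by
  have hpi := pi_gt_d2
  have hpi2 := pi_lt_d2
  have hr := range (21/10) (9/4) x (63/125) (629/1000) (by norm_num) (by linarith) h1 h2
    (by norm_num [cT, Finset.sum_range_succ, Nat.factorial])
    (by norm_num [cT, Finset.sum_range_succ, Nat.factorial])
  apply delta_gt (873/100000) (21/800) x
  · push_cast
    apply concave_aux _ _ (21/10) (9/4) x (by norm_num) (by linarith) (by linarith) h1 h2
    · exact node _ (by norm_num) _ _ (by norm_num)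
        (by norm_num [cT, Finset.sum_range_succ, Nat.factorial])
    · exact node _ (by norm_num) _ _ (by norm_num)
        (by norm_num [cT, Finset.sum_range_succ, Nat.factorial])
  · rcases le_total (-cos x) (1133/2000) with h | h
    · exact ev_pos _ (63/125) (1133/2000) (by norm_num [tp, vl, padd, shift, step, low]) _ (by push_cast; exact hr.1)
        (by push_cast; exact h)
    · exact ev_pos _ (1133/2000) (629/1000) (by norm_num [tp, vl, padd, shift, step, low]) _ (by push_cast; exact h)
        (by push_cast; exact hr.2)

lemma piece3 (x : ℝ) (h1 : (9/4) ≤ x) (h2 : x ≤ (12/5)) : Δ x > 0.29 := by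
  have hpi := pi_gt_d2
  have hpi2 := pi_lt_d2
  have hr := range (9/4) (12/5) x (157/250) (369/500) (by norm_num) (by linarith) h1 h2
    (by norm_num [cT, Finset.sum_range_succ, Nat.factorial])
    (by norm_num [cT, Finset.sum_range_succ, Nat.factorial])
  apply delta_gt (107/20000) (791/25000) x
  · push_cast
    apply concave_aux _ _ (9/4) (12/5) x (by norm_num) (by linarith) (by linarith) h1 h2
    · exact node _ (by norm_num) _ _ (by norm_num)
        (by norm_num [cT, Finset.sum_range_succ, Nat.factorial])
    · exact node _ (by norm_num) _ _ (by norm_num)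
        (by norm_num [cT, Finset.sum_range_succ, Nat.factorial])
  · rcases le_total (-cos x) (683/1000) with h | h
    · exact ev_pos _ (157/250) (683/1000) (by norm_num [tp, vl, padd, shift, step, low]) _ (by push_cast; exact hr.1)
        (by push_cast; exact h)
    · exact ev_pos _ (683/1000) (369/500) (by norm_num [tp, vl, padd, shift, step, low]) _ (by push_cast; exact h)
        (by push_cast; exact hr.2)

lemma piece4 (x : ℝ) (h1 : (12/5) ≤ x) (h2 : x ≤ (51/20)) : Δ x > 0.29 := by
  have hpi := pi_gt_d2
  have hpi2 := pi_lt_d2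
  have hr := range (12/5) (51/20) x (737/1000) (831/1000) (by norm_num) (by linarith) h1 h2
    (by norm_num [cT, Finset.sum_range_succ, Nat.factorial])
    (by norm_num [cT, Finset.sum_range_succ, Nat.factorial])
  apply delta_gt (-(57/100000)) (1983/50000) x
  · push_cast
    apply concave_aux _ _ (12/5) (51/20) x (by norm_num) (by linarith) (by linarith) h1 h2
    · exact node _ (by norm_num) _ _ (by norm_num)
        (by norm_num [cT, Finset.sum_range_succ, Nat.factorial])
    · exact node _ (by norm_num) _ _ (by norm_num)
        (by norm_num [cT, Finset.sum_range_succ, Nat.factorial])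
  · rcases le_total (-cos x) (98/125) with h | h
    · exact ev_pos _ (737/1000) (98/125) (by norm_num [tp, vl, padd, shift, step, low]) _ (by push_cast; exact hr.1)
        (by push_cast; exact h)
    · exact ev_pos _ (98/125) (831/1000) (by norm_num [tp, vl, padd, shift, step, low]) _ (by push_cast; exact h)
        (by push_cast; exact hr.2)

lemma piece5 (x : ℝ) (h1 : (51/20) ≤ x) (h2 : x ≤ (67/25)) : Δ x > 0.29 := by
  have hpi := pi_gt_d2
  have hpi2 := pi_lt_d2
  have hr := range (51/20) (67/25) x (83/100) (112/125) (by norm_num) (by linarith) h1 h2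
    (by norm_num [cT, Finset.sum_range_succ, Nat.factorial])
    (by norm_num [cT, Finset.sum_range_succ, Nat.factorial])
  apply delta_gt (-(519/50000)) (1287/25000) x
  · push_cast
    apply concave_aux _ _ (51/20) (67/25) x (by norm_num) (by linarith) (by linarith) h1 h2
    · exact node _ (by norm_num) _ _ (by norm_num)
        (by norm_num [cT, Finset.sum_range_succ, Nat.factorial])
    · exact node _ (by norm_num) _ _ (by norm_num)
        (by norm_num [cT, Finset.sum_range_succ, Nat.factorial])
  · rcases le_total (-cos x) (863/1000) with h | h
    · exact ev_pos _ (83/100) (863/1000) (by norm_num [tp, vl, padd, shift, step, low]) _ (by push_cast; exact hr.1)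
        (by push_cast; exact h)
    · exact ev_pos _ (863/1000) (112/125) (by norm_num [tp, vl, padd, shift, step, low]) _ (by push_cast; exact h)
        (by push_cast; exact hr.2)

end VietorisAux

theorem lemma8_a : ∀ x ∈ Set.Icc (5 * π / 8 : ℝ) 2.68, Δ x > 0.29 := by
  rintro x ⟨h1, h2⟩
  have hpi := pi_gt_d4
  norm_num at h2 hpi
  rcases le_total x (21/10) with h3 | h3
  · exact VietorisAux.piece1 x (by linarith) h3
  rcases le_total x (9/4) with h4 | h4
  · exact VietorisAux.piece2 x h3 h4
  rcases le_total x (12/5) with h5 | h5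
  · exact VietorisAux.piece3 x h4 h5
  rcases le_total x (51/20) with h6 | h6
  · exact VietorisAux.piece4 x h5 h6
  exact VietorisAux.piece5 x h6 (by linarith)
end

section
/- With Δ(x) = Σ_{k=0}^{21} (−1)^k (b_k − b_{22}) cos(kx) − (820/33)(1 − cos(x/10)), where b_{2k} = b_{2k+1} = 4^{−k}·binomial(2k,k): Δ(x) > 0.46 for all x ∈ [2.68, 2.83]. -/
open Real

lemma cos_rec (x : ℝ) (m n p : ℝ) (hn : n = m + 1) (hp : p = m + 2) :
    cos (p * x) = 2 * cos x * cos (n * x) - cos (m * x) := by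
  subst hn hp
  have h1 : (m + 2) * x = (m + 1) * x + x := by ring
  have h2 : m * x = (m + 1) * x - x := by ring
  rw [h1, h2, cos_add, cos_sub]; ring

/-- The cosine sum as a polynomial in `cos x`. -/
lemma delta_eq (x c : ℝ) (hc : cos x = c) : Δ x = ((327615/524288)*c^0 + (-207897/524288)*c^1 + (-95259/262144)*c^2 + (237799/65536)*c^3 + (1170829/65536)*c^4 + (-3139601/32768)*c^5 + (-1100661/4096)*c^6 + (282931/256)*c^7 + (8348771/4096)*c^8 + (-14233447/2048)*c^9 + (-9007807/1024)*c^10 + (6670957/256)*c^11 + (2934853/128)*c^12 + (-1945963/32)*c^13 + (-73463/2)*c^14 + (178113/2)*c^15 + (565513/16)*c^16 + (-636233/8)*c^17 + (-74919/4)*c^18 + (39559)*c^19 + (4199)*c^20 + (-8398)*c^21)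
    - (820/33) * (1 - cos (x/10)) := by
  have c0 : cos (0 * x) = 1 := by simp
  have c1 : cos (1 * x) = c := by simpa using hc
  have c2 : cos (2 * x) = (-1)*c^0 + (2)*c^2 := by
    rw [cos_rec x 0 1 2 (by norm_num) (by norm_num), c1, c0, hc]; ring
  have c3 : cos (3 * x) = (-3)*c^1 + (4)*c^3 := by
    rw [cos_rec x 1 2 3 (by norm_num) (by norm_num), c2, c1, hc]; ring
  have c4 : cos (4 * x) = (1)*c^0 + (-8)*c^2 + (8)*c^4 := by
    rw [cos_rec x 2 3 4 (by norm_num) (by norm_num), c3, c2, hc]; ring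
  have c5 : cos (5 * x) = (5)*c^1 + (-20)*c^3 + (16)*c^5 := by
    rw [cos_rec x 3 4 5 (by norm_num) (by norm_num), c4, c3, hc]; ring
  have c6 : cos (6 * x) = (-1)*c^0 + (18)*c^2 + (-48)*c^4 + (32)*c^6 := by
    rw [cos_rec x 4 5 6 (by norm_num) (by norm_num), c5, c4, hc]; ring
  have c7 : cos (7 * x) = (-7)*c^1 + (56)*c^3 + (-112)*c^5 + (64)*c^7 := by
    rw [cos_rec x 5 6 7 (by norm_num) (by norm_num), c6, c5, hc]; ring
  have c8 : cos (8 * x) = (1)*c^0 + (-32)*c^2 + (160)*c^4 + (-256)*c^6 + (128)*c^8 := by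
    rw [cos_rec x 6 7 8 (by norm_num) (by norm_num), c7, c6, hc]; ring
  have c9 : cos (9 * x) = (9)*c^1 + (-120)*c^3 + (432)*c^5 + (-576)*c^7 + (256)*c^9 := by
    rw [cos_rec x 7 8 9 (by norm_num) (by norm_num), c8, c7, hc]; ring
  have c10 : cos (10 * x) = (-1)*c^0 + (50)*c^2 + (-400)*c^4 + (1120)*c^6 + (-1280)*c^8 + (512)*c^10 := by
    rw [cos_rec x 8 9 10 (by norm_num) (by norm_num), c9, c8, hc]; ring
  have c11 : cos (11 * x) = (-11)*c^1 + (220)*c^3 + (-1232)*c^5 + (2816)*c^7 + (-2816)*c^9 + (1024)*c^11 := by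
    rw [cos_rec x 9 10 11 (by norm_num) (by norm_num), c10, c9, hc]; ring
  have c12 : cos (12 * x) = (1)*c^0 + (-72)*c^2 + (840)*c^4 + (-3584)*c^6 + (6912)*c^8 + (-6144)*c^10 + (2048)*c^12 := by
    rw [cos_rec x 10 11 12 (by norm_num) (by norm_num), c11, c10, hc]; ring
  have c13 : cos (13 * x) = (13)*c^1 + (-364)*c^3 + (2912)*c^5 + (-9984)*c^7 + (16640)*c^9 + (-13312)*c^11 + (4096)*c^13 := by
    rw [cos_rec x 11 12 13 (by norm_num) (by norm_num), c12, c11, hc]; ring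
  have c14 : cos (14 * x) = (-1)*c^0 + (98)*c^2 + (-1568)*c^4 + (9408)*c^6 + (-26880)*c^8 + (39424)*c^10 + (-28672)*c^12 + (8192)*c^14 := by
    rw [cos_rec x 12 13 14 (by norm_num) (by norm_num), c13, c12, hc]; ring
  have c15 : cos (15 * x) = (-15)*c^1 + (560)*c^3 + (-6048)*c^5 + (28800)*c^7 + (-70400)*c^9 + (92160)*c^11 + (-61440)*c^13 + (16384)*c^15 := by
    rw [cos_rec x 13 14 15 (by norm_num) (by norm_num), c14, c13, hc]; ring
  have c16 : cos (16 * x) = (1)*c^0 + (-128)*c^2 + (2688)*c^4 + (-21504)*c^6 + (84480)*c^8 + (-180224)*c^10 + (212992)*c^12 + (-131072)*c^14 + (32768)*c^16 := by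
    rw [cos_rec x 14 15 16 (by norm_num) (by norm_num), c15, c14, hc]; ring
  have c17 : cos (17 * x) = (17)*c^1 + (-816)*c^3 + (11424)*c^5 + (-71808)*c^7 + (239360)*c^9 + (-452608)*c^11 + (487424)*c^13 + (-278528)*c^15 + (65536)*c^17 := by
    rw [cos_rec x 15 16 17 (by norm_num) (by norm_num), c16, c15, hc]; ring
  have c18 : cos (18 * x) = (-1)*c^0 + (162)*c^2 + (-4320)*c^4 + (44352)*c^6 + (-228096)*c^8 + (658944)*c^10 + (-1118208)*c^12 + (1105920)*c^14 + (-589824)*c^16 + (131072)*c^18 := by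
    rw [cos_rec x 16 17 18 (by norm_num) (by norm_num), c17, c16, hc]; ring
  have c19 : cos (19 * x) = (-19)*c^1 + (1140)*c^3 + (-20064)*c^5 + (160512)*c^7 + (-695552)*c^9 + (1770496)*c^11 + (-2723840)*c^13 + (2490368)*c^15 + (-1245184)*c^17 + (262144)*c^19 := by
    rw [cos_rec x 17 18 19 (by norm_num) (by norm_num), c18, c17, hc]; ring
  have c20 : cos (20 * x) = (1)*c^0 + (-200)*c^2 + (6600)*c^4 + (-84480)*c^6 + (549120)*c^8 + (-2050048)*c^10 + (4659200)*c^12 + (-6553600)*c^14 + (5570560)*c^16 + (-2621440)*c^18 + (524288)*c^20 := by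
    rw [cos_rec x 18 19 20 (by norm_num) (by norm_num), c19, c18, hc]; ring
  have c21 : cos (21 * x) = (21)*c^1 + (-1540)*c^3 + (33264)*c^5 + (-329472)*c^7 + (1793792)*c^9 + (-5870592)*c^11 + (12042240)*c^13 + (-15597568)*c^15 + (12386304)*c^17 + (-5505024)*c^19 + (1048576)*c^21 := by
    rw [cos_rec x 19 20 21 (by norm_num) (by norm_num), c20, c19, hc]; ring
  have b0 : b 0 = (1) := by norm_num [b, Nat.choose]
  have b1 : b 1 = (1) := by norm_num [b, Nat.choose]
  have b2 : b 2 = (1/2) := by norm_num [b, Nat.choose]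
  have b3 : b 3 = (1/2) := by norm_num [b, Nat.choose]
  have b4 : b 4 = (3/8) := by norm_num [b, Nat.choose]
  have b5 : b 5 = (3/8) := by norm_num [b, Nat.choose]
  have b6 : b 6 = (5/16) := by norm_num [b, Nat.choose]
  have b7 : b 7 = (5/16) := by norm_num [b, Nat.choose]
  have b8 : b 8 = (35/128) := by norm_num [b, Nat.choose]
  have b9 : b 9 = (35/128) := by norm_num [b, Nat.choose]
  have b10 : b 10 = (63/256) := by norm_num [b, Nat.choose]
  have b11 : b 11 = (63/256) := by norm_num [b, Nat.choose]
  have b12 : b 12 = (231/1024) := by norm_num [b, Nat.choose]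
  have b13 : b 13 = (231/1024) := by norm_num [b, Nat.choose]
  have b14 : b 14 = (429/2048) := by norm_num [b, Nat.choose]
  have b15 : b 15 = (429/2048) := by norm_num [b, Nat.choose]
  have b16 : b 16 = (6435/32768) := by norm_num [b, Nat.choose]
  have b17 : b 17 = (6435/32768) := by norm_num [b, Nat.choose]
  have b18 : b 18 = (12155/65536) := by norm_num [b, Nat.choose]
  have b19 : b 19 = (12155/65536) := by norm_num [b, Nat.choose]
  have b20 : b 20 = (46189/262144) := by norm_num [b, Nat.choose]
  have b21 : b 21 = (46189/262144) := by norm_num [b, Nat.choose]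
  have b22 : b 22 = (88179/524288) := by norm_num [b, Nat.choose]
  unfold Δ
  simp only [Finset.sum_range_succ, Finset.sum_range_zero]
  push_cast
  rw [c0, c1, c2, c3, c4, c5, c6, c7, c8, c9, c10, c11, c12, c13, c14, c15, c16, c17, c18, c19, c20, c21, b0, b1, b2, b3, b4, b5, b6, b7, b8, b9, b10, b11, b12, b13, b14, b15, b16, b17, b18, b19, b20, b21, b22]
  ring

lemma dbl {x l u L U : ℝ} (h : l ≤ cos (x/2) ∧ cos (x/2) ≤ u) (hl : 0 ≤ l)
    (hL : L ≤ 2*l^2-1) (hU : 2*u^2-1 ≤ U) : L ≤ cos x ∧ cos x ≤ U := by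
  have e : cos x = 2 * cos (x/2)^2 - 1 := by rw [← cos_two_mul]; ring_nf
  rw [e]
  constructor <;> nlinarith [h.1, h.2]

lemma small (x : ℝ) (h : |x| ≤ 1) :
    1 - x^2/2 - x^4*(5/96) ≤ cos x ∧ cos x ≤ 1 - x^2/2 + x^4*(5/96) := by
  have := abs_le.1 (cos_bound h)
  rw [Even.pow_abs (by decide)] at this
  constructor <;> linarith [this.1, this.2]

lemma cosb0 : (-4477/5000) ≤ cos ((67/25) : ℝ) ∧ cos ((67/25) : ℝ) ≤ (-8953/10000) := by
  have h0 : (1999561601/2000000000) ≤ cos ((67/25)/2/2/2/2/2/2/2 : ℝ) ∧ cos ((67/25)/2/2/2/2/2/2/2 : ℝ) ≤ (4998904103/5000000000) := by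
    have := small ((67/25)/2/2/2/2/2/2/2 : ℝ) (by norm_num [abs_le])
    constructor
    · refine le_trans ?_ this.1; norm_num
    · refine le_trans this.2 ?_; norm_num
  have h1 : (499561649/500000000) ≤ cos ((67/25)/2/2/2/2/2/2 : ℝ) ∧ cos ((67/25)/2/2/2/2/2/2 : ℝ) ≤ (1998246757/2000000000) := dbl h0 (by norm_num) (by norm_num) (by norm_num)
  have h2 : (2491236823/2500000000) ≤ cos ((67/25)/2/2/2/2/2 : ℝ) ∧ cos ((67/25)/2/2/2/2/2 : ℝ) ≤ (996495051/1000000000) := dbl h1 (by norm_num) (by norm_num) (by norm_num)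
  have h3 : (4930017453/5000000000) ≤ cos ((67/25)/2/2/2/2 : ℝ) ∧ cos ((67/25)/2/2/2/2 : ℝ) ≤ (4930023867/5000000000) := dbl h2 (by norm_num) (by norm_num) (by norm_num)
  have h4 : (9444057669/10000000000) ≤ cos ((67/25)/2/2/2 : ℝ) ∧ cos ((67/25)/2/2/2 : ℝ) ≤ (1180513533/1250000000) := dbl h3 (by norm_num) (by norm_num) (by norm_num)
  have h5 : (7838045051/10000000000) ≤ cos ((67/25)/2/2 : ℝ) ∧ cos ((67/25)/2/2 : ℝ) ≤ (7838236181/10000000000) := dbl h4 (by norm_num) (by norm_num) (by norm_num)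
  have h6 : (571747511/2500000000) ≤ cos ((67/25)/2 : ℝ) ∧ cos ((67/25)/2 : ℝ) ≤ (1143794643/5000000000) := dbl h5 (by norm_num) (by norm_num) (by norm_num)
  exact dbl h6 (by norm_num) (by norm_num) (by norm_num)

lemma cosb1 : (-73/80) ≤ cos ((68/25) : ℝ) ∧ cos ((68/25) : ℝ) ≤ (-2281/2500) := by
  have h0 : (9997742081/10000000000) ≤ cos ((68/25)/2/2/2/2/2/2/2 : ℝ) ∧ cos ((68/25)/2/2/2/2/2/2/2 : ℝ) ≤ (4998871147/5000000000) := by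
    have := small ((68/25)/2/2/2/2/2/2/2 : ℝ) (by norm_num [abs_le])
    constructor
    · refine le_trans ?_ this.1; norm_num
    · refine le_trans this.2 ?_; norm_num
  have h1 : (9990969343/10000000000) ≤ cos ((68/25)/2/2/2/2/2/2 : ℝ) ∧ cos ((68/25)/2/2/2/2/2/2 : ℝ) ≤ (2497742549/2500000000) := dbl h0 (by norm_num) (by norm_num) (by norm_num)
  have h2 : (4981946841/5000000000) ≤ cos ((68/25)/2/2/2/2/2 : ℝ) ∧ cos ((68/25)/2/2/2/2/2 : ℝ) ≤ (2490974273/2500000000) := dbl h1 (by norm_num) (by norm_num) (by norm_num)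
  have h3 : (9855835461/10000000000) ≤ cos ((68/25)/2/2/2/2 : ℝ) ∧ cos ((68/25)/2/2/2/2 : ℝ) ≤ (2463962263/2500000000) := dbl h2 (by norm_num) (by norm_num) (by norm_num)
  have h4 : (4713749263/5000000000) ≤ cos ((68/25)/2/2/2 : ℝ) ∧ cos ((68/25)/2/2/2 : ℝ) ≤ (2356888027/2500000000) := dbl h3 (by norm_num) (by norm_num) (by norm_num)
  have h5 : (7775545691/10000000000) ≤ cos ((68/25)/2/2 : ℝ) ∧ cos ((68/25)/2/2 : ℝ) ≤ (31102991/40000000) := dbl h4 (by norm_num) (by norm_num) (by norm_num)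
  have h6 : (1045911079/5000000000) ≤ cos ((68/25)/2 : ℝ) ∧ cos ((68/25)/2 : ℝ) ≤ (418490123/2000000000) := dbl h5 (by norm_num) (by norm_num) (by norm_num)
  exact dbl h6 (by norm_num) (by norm_num) (by norm_num)

lemma cosb2 : (-9519/10000) ≤ cos ((283/100) : ℝ) ∧ cos ((283/100) : ℝ) ≤ (-4759/5000) := by
  have h0 : (9997555753/10000000000) ≤ cos ((283/100)/2/2/2/2/2/2/2 : ℝ) ∧ cos ((283/100)/2/2/2/2/2/2/2 : ℝ) ≤ (9997556003/10000000000) := by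
    have := small ((283/100)/2/2/2/2/2/2/2 : ℝ) (by norm_num [abs_le])
    constructor
    · refine le_trans ?_ this.1; norm_num
    · refine le_trans this.2 ?_; norm_num
  have h1 : (4995112103/5000000000) ≤ cos ((283/100)/2/2/2/2/2/2 : ℝ) ∧ cos ((283/100)/2/2/2/2/2/2 : ℝ) ≤ (9990225207/10000000000) := dbl h0 (by norm_num) (by norm_num) (by norm_num)
  have h2 : (9960915937/10000000000) ≤ cos ((283/100)/2/2/2/2/2 : ℝ) ∧ cos ((283/100)/2/2/2/2/2 : ℝ) ≤ (4980459969/5000000000) := dbl h1 (by norm_num) (by norm_num) (by norm_num)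
  have h3 : (492198463/500000000) ≤ cos ((283/100)/2/2/2/2 : ℝ) ∧ cos ((283/100)/2/2/2/2 : ℝ) ≤ (9843985203/10000000000) := dbl h2 (by norm_num) (by norm_num) (by norm_num)
  have h4 : (4690373079/5000000000) ≤ cos ((283/100)/2/2/2 : ℝ) ∧ cos ((283/100)/2/2/2 : ℝ) ≤ (1172601117/1250000000) := dbl h3 (by norm_num) (by norm_num) (by norm_num)
  have h5 : (474979981/625000000) ≤ cos ((283/100)/2/2 : ℝ) ∧ cos ((283/100)/2/2 : ℝ) ≤ (7599915259/10000000000) := dbl h4 (by norm_num) (by norm_num) (by norm_num)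
  have h6 : (193878287/1250000000) ≤ cos ((283/100)/2 : ℝ) ∧ cos ((283/100)/2 : ℝ) ≤ (1551742389/10000000000) := dbl h5 (by norm_num) (by norm_num) (by norm_num)
  exact dbl h6 (by norm_num) (by norm_num) (by norm_num)

lemma pos0 (t : ℝ) (h0 : 0 ≤ t) (h1 : t ≤ (43/2500)) : (284459/206250) < (693241610838730788483591019679995682572340462727805059737119155461538755960832141447/500000000000000000000000000000000000000000000000000000000000000000000000000000000000)*t^0 + (223288662745858664337156796055492614107267618653200668297718450322671181195617779/50000000000000000000000000000000000000000000000000000000000000000000000000000000)*t^1 + (7119966112008045280623846113593564471728383891220344321545070614986063682643/500000000000000000000000000000000000000000000000000000000000000000000000000)*t^2 + (-13605033213773741622496147630508164656491081155652122608299545043338159037/50000000000000000000000000000000000000000000000000000000000000000000000)*t^3 + (-17128341561259183422016730403442806521008360603682005989389957921083461/10000000000000000000000000000000000000000000000000000000000000000000)*t^4 + (175851116390088767511643401495350366175557231965762442944766614538571/5000000000000000000000000000000000000000000000000000000000000000)*t^5 + (36812149453698122639330614958457148017037888677877625162975411769/62500000000000000000000000000000000000000000000000000000000)*t^6 + (5355856405029501590510147242276569274442044586967761829901917/1250000000000000000000000000000000000000000000000000000)*t^7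 + (9691109561016287583323049436878207383397049038246452972523/500000000000000000000000000000000000000000000000000)*t^8 + (3044530352996563651999872501813418474896124150354228887/50000000000000000000000000000000000000000000000)*t^9 + (1752024427234176917347801410660995458977320782836837/12500000000000000000000000000000000000000000)*t^10 + (304639581720937510976704417330468442283917367429/1250000000000000000000000000000000000000)*t^11 + (16294850522489729758723519668714375293922231/50000000000000000000000000000000000)*t^12 + (1691929386229922007803721961813500443211/5000000000000000000000000000000)*t^13 + (34203401161632901809980045861639741/125000000000000000000000000)*t^14 + (10734030299102694742947029176793/62500000000000000000000)*t^15 + (4140641555283950660485956843/50000000000000000000)*t^16 + (30084132781416527017243/1000000000000000)*t^17 + (398169353044706659/50000000000)*t^18 + (7246235823411/5000000)*t^19 + (810461587/5000)*t^20 + (8398)*t^21 := by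
  have up : ∀ n : ℕ, t^(n+1) ≤ t * (43/2500)^n := by
    intro n
    rw [pow_succ']
    exact mul_le_mul_of_nonneg_left (pow_le_pow_left₀ h0 h1 n) h0
  have p2 : 0 ≤ t^2 := by positivity
  have p3 : t^3 ≤ t * (43/2500)^2 := up 2
  have p4 : t^4 ≤ t * (43/2500)^3 := up 3
  have p5 : 0 ≤ t^5 := by positivity
  have p6 : 0 ≤ t^6 := by positivity
  have p7 : 0 ≤ t^7 := by positivity
  have p8 : 0 ≤ t^8 := by positivity
  have p9 : 0 ≤ t^9 := by positivity
  have p10 : 0 ≤ t^10 := by positivity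
  have p11 : 0 ≤ t^11 := by positivity
  have p12 : 0 ≤ t^12 := by positivity
  have p13 : 0 ≤ t^13 := by positivity
  have p14 : 0 ≤ t^14 := by positivity
  have p15 : 0 ≤ t^15 := by positivity
  have p16 : 0 ≤ t^16 := by positivity
  have p17 : 0 ≤ t^17 := by positivity
  have p18 : 0 ≤ t^18 := by positivity
  have p19 : 0 ≤ t^19 := by positivity
  have p20 : 0 ≤ t^20 := by positivity
  have p21 : 0 ≤ t^21 := by positivity
  norm_num only at p3 p4
  linarith

lemma piece0 (x : ℝ) (h0 : 2.68 ≤ x) (h1 : x ≤ 2.72) : Δ x > 0.46 := by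
  have hpi := pi_gt_d2
  have a1 : cos x ≤ cos ((67/25) : ℝ) :=
    cos_le_cos_of_nonneg_of_le_pi (by norm_num) (by linarith) (by linarith)
  have a2 : cos ((68/25) : ℝ) ≤ cos x :=
    cos_le_cos_of_nonneg_of_le_pi (by linarith) (by linarith) (by linarith)
  have a3 := cosb0.2
  have a4 := cosb1.1
  obtain ⟨t, ht⟩ : ∃ t, cos x = -((8953/10000) + t) := ⟨-cos x - (8953/10000), by ring⟩
  have hp := pos0 t (by linarith) (by linarith)
  have hq : 1 - (x/10)^2/2 ≤ cos (x/10) := one_sub_sq_div_two_le_cos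
  have hx : x^2 ≤ (68/25)^2 := pow_le_pow_left₀ (by linarith) (by linarith) 2
  rw [delta_eq x _ ht]
  have e : (327615/524288)*(-((8953/10000) + t))^0 + (-207897/524288)*(-((8953/10000) + t))^1 + (-95259/262144)*(-((8953/10000) + t))^2 + (237799/65536)*(-((8953/10000) + t))^3 + (1170829/65536)*(-((8953/10000) + t))^4 + (-3139601/32768)*(-((8953/10000) + t))^5 + (-1100661/4096)*(-((8953/10000) + t))^6 + (282931/256)*(-((8953/10000) + t))^7 + (8348771/4096)*(-((8953/10000) + t))^8 + (-14233447/2048)*(-((8953/10000) + t))^9 + (-9007807/1024)*(-((8953/10000) + t))^10 + (6670957/256)*(-((8953/10000) + t))^11 + (2934853/128)*(-((8953/10000) + t))^12 + (-1945963/32)*(-((8953/10000) + t))^13 + (-73463/2)*(-((8953/10000) + t))^14 + (178113/2)*(-((8953/10000) + t))^15 + (565513/16)*(-((8953/10000) + t))^16 + (-636233/8)*(-((8953/10000) + t))^17 + (-74919/4)*(-((8953/10000) + t))^18 + (39559)*(-((8953/10000) + t))^19 + (4199)*(-((8953/10000) + t))^20 + (-8398)*(-((8953/10000) + t))^21 =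 (693241610838730788483591019679995682572340462727805059737119155461538755960832141447/500000000000000000000000000000000000000000000000000000000000000000000000000000000000)*t^0 + (223288662745858664337156796055492614107267618653200668297718450322671181195617779/50000000000000000000000000000000000000000000000000000000000000000000000000000000)*t^1 + (7119966112008045280623846113593564471728383891220344321545070614986063682643/500000000000000000000000000000000000000000000000000000000000000000000000000)*t^2 + (-13605033213773741622496147630508164656491081155652122608299545043338159037/50000000000000000000000000000000000000000000000000000000000000000000000)*t^3 + (-17128341561259183422016730403442806521008360603682005989389957921083461/10000000000000000000000000000000000000000000000000000000000000000000)*t^4 + (175851116390088767511643401495350366175557231965762442944766614538571/5000000000000000000000000000000000000000000000000000000000000000)*t^5 + (36812149453698122639330614958457148017037888677877625162975411769/62500000000000000000000000000000000000000000000000000000000)*t^6 + (5355856405029501590510147242276569274442044586967761829901917/1250000000000000000000000000000000000000000000000000000)*t^7 + (9691109561016287583323049436878207383397049038246452972523/500000000000000000000000000000000000000000000000000)*t^8 + (3044530352996563651999872501813418474896124150354228887/50000000000000000000000000000000000000000000000)*t^9 + (1752024427234176917347801410660995458977320782836837/12500000000000000000000000000000000000000000)*t^10 + (304639581720937510976704417330468442283917367429/1250000000000000000000000000000000000000)*t^11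 + (16294850522489729758723519668714375293922231/50000000000000000000000000000000000)*t^12 + (1691929386229922007803721961813500443211/5000000000000000000000000000000)*t^13 + (34203401161632901809980045861639741/125000000000000000000000000)*t^14 + (10734030299102694742947029176793/62500000000000000000000)*t^15 + (4140641555283950660485956843/50000000000000000000)*t^16 + (30084132781416527017243/1000000000000000)*t^17 + (398169353044706659/50000000000)*t^18 + (7246235823411/5000000)*t^19 + (810461587/5000)*t^20 + (8398)*t^21 := by ring
  rw [e]
  generalize (693241610838730788483591019679995682572340462727805059737119155461538755960832141447/500000000000000000000000000000000000000000000000000000000000000000000000000000000000)*t^0 + (223288662745858664337156796055492614107267618653200668297718450322671181195617779/50000000000000000000000000000000000000000000000000000000000000000000000000000000)*t^1 + (7119966112008045280623846113593564471728383891220344321545070614986063682643/500000000000000000000000000000000000000000000000000000000000000000000000000)*t^2 + (-13605033213773741622496147630508164656491081155652122608299545043338159037/50000000000000000000000000000000000000000000000000000000000000000000000)*t^3 + (-17128341561259183422016730403442806521008360603682005989389957921083461/10000000000000000000000000000000000000000000000000000000000000000000)*t^4 + (175851116390088767511643401495350366175557231965762442944766614538571/5000000000000000000000000000000000000000000000000000000000000000)*t^5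 + (36812149453698122639330614958457148017037888677877625162975411769/62500000000000000000000000000000000000000000000000000000000)*t^6 + (5355856405029501590510147242276569274442044586967761829901917/1250000000000000000000000000000000000000000000000000000)*t^7 + (9691109561016287583323049436878207383397049038246452972523/500000000000000000000000000000000000000000000000000)*t^8 + (3044530352996563651999872501813418474896124150354228887/50000000000000000000000000000000000000000000000)*t^9 + (1752024427234176917347801410660995458977320782836837/12500000000000000000000000000000000000000000)*t^10 + (304639581720937510976704417330468442283917367429/1250000000000000000000000000000000000000)*t^11 + (16294850522489729758723519668714375293922231/50000000000000000000000000000000000)*t^12 + (1691929386229922007803721961813500443211/5000000000000000000000000000000)*t^13 + (34203401161632901809980045861639741/125000000000000000000000000)*t^14 + (10734030299102694742947029176793/62500000000000000000000)*t^15 + (4140641555283950660485956843/50000000000000000000)*t^16 + (30084132781416527017243/1000000000000000)*t^17 + (398169353044706659/50000000000)*t^18 + (7246235823411/5000000)*t^19 + (810461587/5000)*t^20 + (8398)*t^21 = Q at hp ⊢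
  norm_num at hx ⊢
  linarith

lemma pos1 (t : ℝ) (h0 : 0 ≤ t) (h1 : t ≤ (79/2000)) : (4801649/3300000) < (166616355165838532651641250519983544949758997465958945690751957859477069/113686837721616029739379882812500000000000000000000000000000000000000000)*t^0 + (213769874995559889236162164267125898218815044231652010802796646204579/45474735088646411895751953125000000000000000000000000000000000000000)*t^1 + (-116080879048953324205682953144595056072153054173539664648603691/1818989403545856475830078125000000000000000000000000000000000000)*t^2 + (-154956452927081796442466045146688748923187868200462576202763453/727595761418342590332031250000000000000000000000000000000000)*t^3 + (2768057074759678651719493542123745806344137143960016875800433/582076609134674072265625000000000000000000000000000000000)*t^4 + (149069182100377952496718379572108309167658768995778915745931/1164153218269348144531250000000000000000000000000000000)*t^5 + (75019604391959162088601206037388099323109461350484130967/58207660913467407226562500000000000000000000000000)*t^6 + (35709343649795932431168517747930612162036379738906253/4656612873077392578125000000000000000000000000)*t^7 + (229575629232235431396855850587645709126818908104041/7450580596923828125000000000000000000000000)*t^8 + (265711004152150344146452142414205892782756295527/2980232238769531250000000000000000000000)*t^9 + (574593922628444718643286523489446289263574051/2980232238769531250000000000000000000)*t^10 + (380065722222187612688913542941132842800421/1192092895507812500000000000000000)*t^11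 + (77973388739179140997486155956018465397/190734863281250000000000000000)*t^12 + (31235002074732543421365444127638891/76293945312500000000000000)*t^13 + (2446669802455142825654476118723/7629394531250000000000)*t^14 + (2985098723181226960645350377/15258789062500000000)*t^15 + (4488361798178542952684601/48828125000000000)*t^16 + (127377566397223242763/3906250000000)*t^17 + (6596335017591397/781250000)*t^18 + (470374508019/312500)*t^19 + (206385049/1250)*t^20 + (8398)*t^21 := by
  have up : ∀ n : ℕ, t^(n+1) ≤ t * (79/2000)^n := by
    intro n
    rw [pow_succ']
    exact mul_le_mul_of_nonneg_left (pow_le_pow_left₀ h0 h1 n) h0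
  have p2 : t^2 ≤ t * (79/2000)^1 := up 1
  have p3 : t^3 ≤ t * (79/2000)^2 := up 2
  have p4 : 0 ≤ t^4 := by positivity
  have p5 : 0 ≤ t^5 := by positivity
  have p6 : 0 ≤ t^6 := by positivity
  have p7 : 0 ≤ t^7 := by positivity
  have p8 : 0 ≤ t^8 := by positivity
  have p9 : 0 ≤ t^9 := by positivity
  have p10 : 0 ≤ t^10 := by positivity
  have p11 : 0 ≤ t^11 := by positivity
  have p12 : 0 ≤ t^12 := by positivity
  have p13 : 0 ≤ t^13 := by positivity
  have p14 : 0 ≤ t^14 := by positivity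
  have p15 : 0 ≤ t^15 := by positivity
  have p16 : 0 ≤ t^16 := by positivity
  have p17 : 0 ≤ t^17 := by positivity
  have p18 : 0 ≤ t^18 := by positivity
  have p19 : 0 ≤ t^19 := by positivity
  have p20 : 0 ≤ t^20 := by positivity
  have p21 : 0 ≤ t^21 := by positivity
  norm_num only at p2 p3
  linarith

lemma piece1 (x : ℝ) (h0 : 2.72 ≤ x) (h1 : x ≤ 2.83) : Δ x > 0.46 := by
  have hpi := pi_gt_d2
  have a1 : cos x ≤ cos ((68/25) : ℝ) :=
    cos_le_cos_of_nonneg_of_le_pi (by norm_num) (by linarith) (by linarith)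
  have a2 : cos ((283/100) : ℝ) ≤ cos x :=
    cos_le_cos_of_nonneg_of_le_pi (by linarith) (by linarith) (by linarith)
  have a3 := cosb1.2
  have a4 := cosb2.1
  obtain ⟨t, ht⟩ : ∃ t, cos x = -((2281/2500) + t) := ⟨-cos x - (2281/2500), by ring⟩
  have hp := pos1 t (by linarith) (by linarith)
  have hq : 1 - (x/10)^2/2 ≤ cos (x/10) := one_sub_sq_div_two_le_cos
  have hx : x^2 ≤ (283/100)^2 := pow_le_pow_left₀ (by linarith) (by linarith) 2
  rw [delta_eq x _ ht]
  have e : (327615/524288)*(-((2281/2500) + t))^0 + (-207897/524288)*(-((2281/2500) + t))^1 + (-95259/262144)*(-((2281/2500) + t))^2 + (237799/65536)*(-((2281/2500) + t))^3 + (1170829/65536)*(-((2281/2500) + t))^4 + (-3139601/32768)*(-((2281/2500) + t))^5 + (-1100661/4096)*(-((2281/2500) + t))^6 + (282931/256)*(-((2281/2500) + t))^7 + (8348771/4096)*(-((2281/2500) + t))^8 + (-14233447/2048)*(-((2281/2500) + t))^9 + (-9007807/1024)*(-((2281/2500) + t))^10 + (6670957/256)*(-((2281/2500) + t))^11 + (2934853/128)*(-((2281/2500)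 + t))^12 + (-1945963/32)*(-((2281/2500) + t))^13 + (-73463/2)*(-((2281/2500) + t))^14 + (178113/2)*(-((2281/2500) + t))^15 + (565513/16)*(-((2281/2500) + t))^16 + (-636233/8)*(-((2281/2500) + t))^17 + (-74919/4)*(-((2281/2500) + t))^18 + (39559)*(-((2281/2500) + t))^19 + (4199)*(-((2281/2500) + t))^20 + (-8398)*(-((2281/2500) + t))^21 = (166616355165838532651641250519983544949758997465958945690751957859477069/113686837721616029739379882812500000000000000000000000000000000000000000)*t^0 + (213769874995559889236162164267125898218815044231652010802796646204579/45474735088646411895751953125000000000000000000000000000000000000000)*t^1 + (-116080879048953324205682953144595056072153054173539664648603691/1818989403545856475830078125000000000000000000000000000000000000)*t^2 + (-154956452927081796442466045146688748923187868200462576202763453/727595761418342590332031250000000000000000000000000000000000)*t^3 + (2768057074759678651719493542123745806344137143960016875800433/582076609134674072265625000000000000000000000000000000000)*t^4 + (149069182100377952496718379572108309167658768995778915745931/1164153218269348144531250000000000000000000000000000000)*t^5 + (75019604391959162088601206037388099323109461350484130967/58207660913467407226562500000000000000000000000000)*t^6 + (35709343649795932431168517747930612162036379738906253/4656612873077392578125000000000000000000000000)*t^7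 + (229575629232235431396855850587645709126818908104041/7450580596923828125000000000000000000000000)*t^8 + (265711004152150344146452142414205892782756295527/2980232238769531250000000000000000000000)*t^9 + (574593922628444718643286523489446289263574051/2980232238769531250000000000000000000)*t^10 + (380065722222187612688913542941132842800421/1192092895507812500000000000000000)*t^11 + (77973388739179140997486155956018465397/190734863281250000000000000000)*t^12 + (31235002074732543421365444127638891/76293945312500000000000000)*t^13 + (2446669802455142825654476118723/7629394531250000000000)*t^14 + (2985098723181226960645350377/15258789062500000000)*t^15 + (4488361798178542952684601/48828125000000000)*t^16 + (127377566397223242763/3906250000000)*t^17 + (6596335017591397/781250000)*t^18 + (470374508019/312500)*t^19 + (206385049/1250)*t^20 + (8398)*t^21 := by ring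
  rw [e]
  generalize (166616355165838532651641250519983544949758997465958945690751957859477069/113686837721616029739379882812500000000000000000000000000000000000000000)*t^0 + (213769874995559889236162164267125898218815044231652010802796646204579/45474735088646411895751953125000000000000000000000000000000000000000)*t^1 + (-116080879048953324205682953144595056072153054173539664648603691/1818989403545856475830078125000000000000000000000000000000000000)*t^2 + (-154956452927081796442466045146688748923187868200462576202763453/727595761418342590332031250000000000000000000000000000000000)*t^3 + (2768057074759678651719493542123745806344137143960016875800433/582076609134674072265625000000000000000000000000000000000)*t^4 + (149069182100377952496718379572108309167658768995778915745931/1164153218269348144531250000000000000000000000000000000)*t^5 + (75019604391959162088601206037388099323109461350484130967/58207660913467407226562500000000000000000000000000)*t^6 + (35709343649795932431168517747930612162036379738906253/4656612873077392578125000000000000000000000000)*t^7 + (229575629232235431396855850587645709126818908104041/7450580596923828125000000000000000000000000)*t^8 + (265711004152150344146452142414205892782756295527/2980232238769531250000000000000000000000)*t^9 + (574593922628444718643286523489446289263574051/2980232238769531250000000000000000000)*t^10 + (380065722222187612688913542941132842800421/1192092895507812500000000000000000)*t^11 + (77973388739179140997486155956018465397/190734863281250000000000000000)*t^12 + (31235002074732543421365444127638891/76293945312500000000000000)*t^13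 + (2446669802455142825654476118723/7629394531250000000000)*t^14 + (2985098723181226960645350377/15258789062500000000)*t^15 + (4488361798178542952684601/48828125000000000)*t^16 + (127377566397223242763/3906250000000)*t^17 + (6596335017591397/781250000)*t^18 + (470374508019/312500)*t^19 + (206385049/1250)*t^20 + (8398)*t^21 = Q at hp ⊢
  norm_num at hx ⊢
  linarith

theorem lemma8_b : ∀ x ∈ Set.Icc (2.68 : ℝ) 2.83, Δ x > 0.46 := by
  intro x hx
  rcases le_total x 2.72 with h | h
  · exact piece0 x hx.1 h
  · exact piece1 x h hx.2
end

section
/- With Δ(x) = Σ_{k=0}^{21} (−1)^k (b_k − b_{22}) cos(kx) − (820/33)(1 − cos(x/10)), where b_{2k} = b_{2k+1} = 4^{−k}·binomial(2k,k): Δ(x) > 1.78 for all x ∈ [3.021, 3.051]. -/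
open Real

lemma nonneg_of_deriv (f g : ℝ → ℝ) (h0 : f 0 = 0) (hd : ∀ x, HasDerivAt f (g x) x)
    (hg : ∀ x, 0 ≤ x → 0 ≤ g x) : ∀ x, 0 ≤ x → 0 ≤ f x := by
  intro x hx
  have hm : MonotoneOn f (Set.Ici 0) := by
    apply monotoneOn_of_deriv_nonneg (convex_Ici 0)
    · exact fun y _ => (hd y).continuousAt.continuousWithinAt
    · exact fun y _ => (hd y).differentiableAt.differentiableWithinAt
    · intro y hy
      rw [interior_Ici] at hy
      rw [(hd y).deriv]
      exact hg y (le_of_lt hy)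
  have := hm (Set.mem_Ici.2 le_rfl) (Set.mem_Ici.2 hx) hx
  rwa [h0] at this

/-- Taylor polynomial of cosine, degree `2 * n`. -/
noncomputable def cosP (n : ℕ) (x : ℝ) : ℝ :=
  ∑ i ∈ Finset.range (n + 1), (-1) ^ i * (x ^ (2 * i) / (Nat.factorial (2 * i) : ℝ))

/-- Taylor polynomial of sine, degree `2 * n + 1`. -/
noncomputable def sinP (n : ℕ) (x : ℝ) : ℝ :=
  ∑ i ∈ Finset.range (n + 1), (-1) ^ i * (x ^ (2 * i + 1) / (Nat.factorial (2 * i + 1) : ℝ))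

lemma hasDeriv_pow_fact (m : ℕ) (x : ℝ) :
    HasDerivAt (fun x : ℝ => x ^ (m + 1) / (Nat.factorial (m + 1) : ℝ))
      (x ^ m / (Nat.factorial m : ℝ)) x := by
  have h := (hasDerivAt_pow (m + 1) x).div_const (Nat.factorial (m + 1) : ℝ)
  refine h.congr_deriv ?_
  rw [Nat.factorial_succ]
  have : (Nat.factorial m : ℝ) ≠ 0 := by positivity
  push_cast
  try simp only [Nat.add_sub_cancel]
  field_simp

lemma hasDeriv_sinP (n : ℕ) (x : ℝ) : HasDerivAt (sinP n) (cosP n x) x := by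
  unfold sinP cosP
  apply HasDerivAt.fun_sum
  intro i _
  exact (hasDeriv_pow_fact (2 * i) x).const_mul _

lemma hasDeriv_cosP (n : ℕ) (x : ℝ) : HasDerivAt (cosP (n + 1)) (-sinP n x) x := by
  have e : cosP (n + 1) = fun x => (∑ i ∈ Finset.range (n + 1),
      (-1 : ℝ) ^ (i + 1) * (x ^ (2 * i + 1 + 1) / (Nat.factorial (2 * i + 1 + 1) : ℝ))) + 1 := by
    funext y
    unfold cosP
    rw [Finset.sum_range_succ']
    simp [mul_add]
  rw [e]
  apply HasDerivAt.add_const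
  unfold sinP
  rw [← Finset.sum_neg_distrib]
  apply HasDerivAt.fun_sum
  intro i _
  have := (hasDeriv_pow_fact (2 * i + 1) x).const_mul ((-1 : ℝ) ^ (i + 1))
  refine this.congr_deriv ?_
  ring

lemma sinP_zero (n : ℕ) : sinP n 0 = 0 := by simp [sinP]

lemma cosP_zero (n : ℕ) : cosP n 0 = 1 := by
  unfold cosP
  rw [Finset.sum_range_succ']
  simp

lemma sin_step (n : ℕ) (s : ℝ) (h : ∀ x, 0 ≤ x → 0 ≤ s * (cosP n x - cos x)) :
    ∀ x, 0 ≤ x → 0 ≤ s * (sinP n x - sin x) := by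
  apply nonneg_of_deriv (fun x => s * (sinP n x - sin x)) _ _ _ h
  · simp [sinP_zero]
  · intro x
    exact ((hasDeriv_sinP n x).sub (hasDerivAt_sin x)).const_mul s

lemma cos_step (n : ℕ) (s : ℝ) (h : ∀ x, 0 ≤ x → 0 ≤ s * (cosP n x - cos x)) :
    ∀ x, 0 ≤ x → 0 ≤ (-s) * (cosP (n + 1) x - cos x) := by
  apply nonneg_of_deriv (fun x => (-s) * (cosP (n + 1) x - cos x)) _ _ _ (sin_step n s h)
  · simp [cosP_zero]
  · intro x
    have := ((hasDeriv_cosP n x).sub (hasDerivAt_cos x)).const_mul (-s)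
    refine this.congr_deriv ?_
    ring

lemma cos_taylor (n : ℕ) : ∀ x, 0 ≤ x → 0 ≤ (-1 : ℝ) ^ n * (cosP n x - cos x) := by
  induction n with
  | zero => intro x _; simp [cosP, cos_le_one]
  | succ n ih =>
    have := cos_step n _ ih
    intro x hx
    rw [pow_succ, mul_neg_one]
    exact this x hx

lemma cos_ge (x : ℝ) (hx : 0 ≤ x) :
    1 - x ^ 2 / 2 + x ^ 4 / 24 - x ^ 6 / 720 + x ^ 8 / 40320 - x ^ 10 / 3628800 ≤ cos x := by
  have h := cos_taylor 5 x hx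
  simp only [cosP, Finset.sum_range_succ, Finset.sum_range_zero] at h
  norm_num [Nat.factorial] at h
  linarith

lemma b_nonneg_sub (k : ℕ) (hk : k < 22) : 0 ≤ b k - b 22 := by
  interval_cases k <;> norm_num [b, Nat.choose]

lemma term_ge (x : ℝ) (hx : x ∈ Set.Icc (3.021 : ℝ) 3.051) (k : ℕ) (hk : k < 22) :
    (b k - b 22) * (1 - (k * 0.120593) ^ 2 / 2 + (k * 0.120593) ^ 4 / 24
      - (k * 0.120593) ^ 6 / 720 + (k * 0.120593) ^ 8 / 40320 - (k * 0.120593) ^ 10 / 3628800)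
    ≤ (-1) ^ k * (b k - b 22) * cos (k * x) := by
  have hpi := pi_gt_d6
  have hpi' := pi_lt_d6
  obtain ⟨h1, h2⟩ := hx
  have e : (-1) ^ k * cos (k * x) = cos (k * (π - x)) := by
    rw [mul_sub, cos_nat_mul_pi_sub]
  have hk' : (k : ℝ) ≤ 21 := by exact_mod_cast Nat.le_of_lt_succ hk
  have hk0 : (0 : ℝ) ≤ k := Nat.cast_nonneg k
  have hm : cos (k * 0.120593) ≤ cos (k * (π - x)) := by
    apply cos_le_cos_of_nonneg_of_le_pi
    · apply mul_nonneg hk0; norm_num at *; linarith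
    · have : (k : ℝ) * 0.120593 ≤ 21 * 0.120593 := by gcongr
      refine this.trans (le_trans ?_ pi_gt_three.le)
      norm_num
    · apply mul_le_mul_of_nonneg_left _ hk0; norm_num at *; linarith
  have ht := cos_ge (k * 0.120593) (by positivity)
  calc _ ≤ (b k - b 22) * cos (k * (π - x)) :=
        mul_le_mul_of_nonneg_left (ht.trans hm) (b_nonneg_sub k hk)
    _ = _ := by rw [← e]; ring

theorem lemma8_f : ∀ x ∈ Set.Icc (3.021 : ℝ) 3.051, Δ x > 1.78 := by
  intro x hx
  have hs := Finset.sum_le_sum (fun k hk => term_ge x hx k (Finset.mem_range.1 hk))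
  have hc : cos 0.3051 ≤ cos (x / 10) := by
    obtain ⟨h1, h2⟩ := hx
    have hpi := pi_gt_three
    apply cos_le_cos_of_nonneg_of_le_pi <;> norm_num at * <;> linarith
  have hc2 := cos_ge 0.3051 (by norm_num)
  have hc3 := hc2.trans hc
  unfold Δ
  have key : (1.78 : ℝ) + (820/33) * (1 - (1 - 0.3051 ^ 2 / 2 + 0.3051 ^ 4 / 24 - 0.3051 ^ 6 / 720
      + 0.3051 ^ 8 / 40320 - 0.3051 ^ 10 / 3628800)) <
      ∑ k ∈ Finset.range 22, (b k - b 22) * (1 - (k * 0.120593) ^ 2 / 2 + (k * 0.120593) ^ 4 / 24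
      - (k * 0.120593) ^ 6 / 720 + (k * 0.120593) ^ 8 / 40320 - (k * 0.120593) ^ 10 / 3628800) := by
    simp only [Finset.sum_range_succ, Finset.sum_range_zero]
    norm_num [b, Nat.choose]
  have h5 := mul_le_mul_of_nonneg_left hc3 (by norm_num : (0 : ℝ) ≤ 820 / 33)
  have h6 := key.trans_le hs
  rw [gt_iff_lt, lt_sub_iff_add_lt]
  refine lt_of_le_of_lt ?_ h6
  gcongr
end

section
/- Let b_{2k} = b_{2k+1} = 4^{−k}·binomial(2k,k), T_n(x) = Σ_{k=0}^n b_k cos(kx), and α = min over t ∈ [0, π) of T_6(t)/(t − π)^2. Then 0.1229 < α < 0.123. -/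
open Real

noncomputable def T6 (x : ℝ) : ℝ :=
  ∑ k ∈ Finset.range 7, b k * cos (k * x)

noncomputable def α : ℝ := sInf ((fun t => T6 t / (t - π)^2) '' Set.Ico 0 π)

/-- `T6` as a polynomial in the cosine. -/
noncomputable def PP (c : ℝ) : ℝ :=
  9/16 + 11/8*c + 29/8*c^2 - 11/2*c^3 - 12*c^4 + 6*c^5 + 10*c^6

noncomputable def PD (c : ℝ) : ℝ :=
  11/8 + 29/4*c - 33/2*c^2 - 48*c^3 + 30*c^4 + 60*c^5

noncomputable def PDD (c : ℝ) : ℝ :=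
  29/4 - 33*c - 144*c^2 + 120*c^3 + 300*c^4

lemma T6_eq (x : ℝ) : T6 x = PP (cos x) := by
  have h4 : cos (4*x) = 2*(cos (2*x))^2 - 1 := by
    rw [← cos_two_mul]; ring_nf
  have h6 : cos (6*x) = 2*(cos (3*x))^2 - 1 := by
    rw [← cos_two_mul]; ring_nf
  have h5 : cos (5*x) = 2*cos (4*x) * cos x - cos (3*x) := by
    have e1 : cos (5*x) = cos (4*x + x) := by ring_nf
    have e2 : cos (3*x) = cos (4*x - x) := by ring_nf
    rw [e1, e2, cos_add, cos_sub]; ring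
  have c0 : Nat.choose 6 3 = 20 := by decide
  have c1 : Nat.choose 4 2 = 6 := by decide
  unfold T6 b PP
  simp only [Finset.sum_range_succ, Finset.sum_range_zero]
  norm_num [c0, c1]
  rw [h5, h6, h4, cos_three_mul, cos_two_mul]
  ring

/-- Bernstein products are nonnegative. -/
lemma bern {a c d : ℝ} (h1 : a ≤ c) (h2 : c ≤ d) (i j : ℕ) :
    0 ≤ (c - a)^i * (d - c)^j :=
  mul_nonneg (pow_nonneg (by linarith) _) (pow_nonneg (by linarith) _)

lemma polyA1 {c : ℝ} (h1 : -1 ≤ c) (h2 : c ≤ -3/4) : 0.3034 * (1 - c^2) ≤ PP c := by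
  unfold PP
  linarith [bern h1 h2 0 6, bern h1 h2 1 5, bern h1 h2 2 4, bern h1 h2 3 3, bern h1 h2 4 2,
    bern h1 h2 5 1, bern h1 h2 6 0]

lemma polyA2 {c : ℝ} (h1 : -3/4 ≤ c) (h2 : c ≤ -1/2) : 0.3034 * (1 - c^2) ≤ PP c := by
  unfold PP
  linarith [bern h1 h2 0 6, bern h1 h2 1 5, bern h1 h2 2 4, bern h1 h2 3 3, bern h1 h2 4 2,
    bern h1 h2 5 1, bern h1 h2 6 0]

lemma polyA3 {c : ℝ} (h1 : -1/2 ≤ c) (h2 : c ≤ 0) : 0.3034 * (1 - c^2) ≤ PP c := by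
  unfold PP
  linarith [bern h1 h2 0 6, bern h1 h2 1 5, bern h1 h2 2 4, bern h1 h2 3 3, bern h1 h2 4 2,
    bern h1 h2 5 1, bern h1 h2 6 0]

lemma polyB1 {c : ℝ} (h1 : 0 ≤ c) (h2 : c ≤ 3/5) : 0.3034 * (1 + c)^2 ≤ PP c := by
  unfold PP
  linarith [bern h1 h2 0 6, bern h1 h2 1 5, bern h1 h2 2 4, bern h1 h2 3 3, bern h1 h2 4 2,
    bern h1 h2 5 1, bern h1 h2 6 0]

lemma polyB2 {c : ℝ} (h1 : 17/20 ≤ c) (h2 : c ≤ 1) : 0.3034 * (1 + c)^2 ≤ PP c := by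
  unfold PP
  linarith [bern h1 h2 0 6, bern h1 h2 1 5, bern h1 h2 2 4, bern h1 h2 3 3, bern h1 h2 4 2,
    bern h1 h2 5 1, bern h1 h2 6 0]

lemma polyR {c : ℝ} (h1 : 3/5 ≤ c) (h2 : c ≤ 17/20) :
    0 ≤ PDD c * (1 - c^2) - PD c * c - 2 * 0.122901 := by
  unfold PDD PD
  linarith [bern h1 h2 0 6, bern h1 h2 1 5, bern h1 h2 2 4, bern h1 h2 3 3, bern h1 h2 4 2,
    bern h1 h2 5 1, bern h1 h2 6 0]

noncomputable def FF (t : ℝ) : ℝ := PP (cos t) - 0.122901 * (π - t)^2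

noncomputable def FD (t : ℝ) : ℝ := -(PD (cos t) * sin t) + 2 * 0.122901 * (π - t)

lemma PP_hasDeriv (c : ℝ) : HasDerivAt PP (PD c) c := by
  unfold PP PD
  have h := ((((((((hasDerivAt_id c).const_mul (11/8)).const_add (9/16)).add
    ((hasDerivAt_pow 2 c).const_mul (29/8))).sub
    ((hasDerivAt_pow 3 c).const_mul (11/2))).sub
    ((hasDerivAt_pow 4 c).const_mul 12)).add
    ((hasDerivAt_pow 5 c).const_mul 6)).add
    ((hasDerivAt_pow 6 c).const_mul 10))
  refine h.congr_deriv ?_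
  norm_num; ring

lemma PD_hasDeriv (c : ℝ) : HasDerivAt PD (PDD c) c := by
  unfold PD PDD
  have h := (((((((hasDerivAt_id c).const_mul (29/4)).const_add (11/8)).sub
    ((hasDerivAt_pow 2 c).const_mul (33/2))).sub
    ((hasDerivAt_pow 3 c).const_mul 48)).add
    ((hasDerivAt_pow 4 c).const_mul 30)).add
    ((hasDerivAt_pow 5 c).const_mul 60))
  refine h.congr_deriv ?_
  norm_num; ring

lemma FF_hasDeriv (t : ℝ) : HasDerivAt FF (FD t) t := by
  unfold FF FD
  have h1 : HasDerivAt (fun t => PP (cos t)) (PD (cos t) * (-sin t)) t :=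
    (PP_hasDeriv (cos t)).comp t (hasDerivAt_cos t)
  have h2 := ((((hasDerivAt_id t).const_sub π).pow 2).const_mul (0.122901:ℝ))
  refine (h1.sub h2).congr_deriv ?_
  simp; ring

lemma FD_hasDeriv (t : ℝ) : HasDerivAt FD
    (PDD (cos t) * (1 - cos t ^ 2) - PD (cos t) * cos t - 2 * 0.122901) t := by
  unfold FD
  have h1 : HasDerivAt (fun t => PD (cos t)) (PDD (cos t) * (-sin t)) t :=
    (PD_hasDeriv (cos t)).comp t (hasDerivAt_cos t)
  have h2 := ((hasDerivAt_id t).const_sub π).const_mul (2 * 0.122901:ℝ)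
  refine ((h1.mul (hasDerivAt_sin t)).neg.add h2).congr_deriv ?_
  rw [← sin_sq]
  ring

lemma FF_convex : ConvexOn ℝ (Set.Icc (arccos (17/20)) (arccos (3/5))) FF := by
  refine convexOn_of_hasDerivWithinAt2_nonneg (convex_Icc _ _)
    (fun t _ => (FF_hasDeriv t).continuousAt.continuousWithinAt)
    (fun t _ => (FF_hasDeriv t).hasDerivWithinAt)
    (fun t _ => (FD_hasDeriv t).hasDerivWithinAt) ?_
  intro t ht
  have ht := interior_subset ht
  apply polyR
  · have := cos_le_cos_of_nonneg_of_le_pi (le_trans (arccos_nonneg _) ht.1) (arccos_le_pi _) ht.2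
    rwa [cos_arccos (by norm_num) (by norm_num)] at this
  · have := cos_le_cos_of_nonneg_of_le_pi (arccos_nonneg _) (ht.2.trans (arccos_le_pi _)) ht.1
    rwa [cos_arccos (by norm_num) (by norm_num)] at this

lemma trig_bound : |cos 0.7265697 - 0.7474575766| ≤ 1e-8 ∧ |sin 0.7265697 - 0.6643095448| ≤ 1e-8 := by
  have hx : ‖((0.7265697:ℝ):ℂ) * Complex.I‖ = 0.7265697 := by
    rw [norm_mul, Complex.norm_I, Complex.norm_real]; norm_num
  have h := Complex.exp_bound (x := ((0.7265697:ℝ):ℂ) * Complex.I)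
    (by rw [hx]; norm_num) (n := 12) (by norm_num)
  rw [hx] at h
  have hs : ∑ m ∈ Finset.range 12, (((0.7265697:ℝ):ℂ) * Complex.I)^m / (m.factorial : ℂ)
     = ((1 - 0.7265697^2/2 + 0.7265697^4/24 - 0.7265697^6/720 + 0.7265697^8/40320
        - 0.7265697^10/3628800 : ℝ) : ℂ)
      + ((0.7265697 - 0.7265697^3/6 + 0.7265697^5/120 - 0.7265697^7/5040 + 0.7265697^9/362880
        - 0.7265697^11/39916800 : ℝ) : ℂ) * Complex.I := by
    have I2 : Complex.I^2 = -1 := Complex.I_sq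
    have I3 : Complex.I^3 = -Complex.I := Complex.I_pow_three
    have I4 : Complex.I^4 = 1 := Complex.I_pow_four
    have I5 : Complex.I^5 = Complex.I := by rw [pow_succ, I4]; ring
    have I6 : Complex.I^6 = -1 := by rw [pow_succ, I5, ← sq, I2]
    have I7 : Complex.I^7 = -Complex.I := by rw [pow_succ, I6]; ring
    have I8 : Complex.I^8 = 1 := by rw [show 8 = 4*2 from rfl, pow_mul, I4]; ring
    have I9 : Complex.I^9 = Complex.I := by rw [pow_succ, I8]; ring
    have I10 : Complex.I^10 = -1 := by rw [pow_succ, I9, ← sq, I2]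
    have I11 : Complex.I^11 = -Complex.I := by rw [pow_succ, I10]; ring
    simp only [Finset.sum_range_succ, Finset.sum_range_zero, Nat.factorial, mul_pow,
      I2, I3, I4, I5, I6, I7, I8, I9, I10, I11]
    push_cast
    ring
  rw [hs, Complex.exp_mul_I, ← Complex.ofReal_cos, ← Complex.ofReal_sin] at h
  have hre := (Complex.abs_re_le_norm _).trans h
  have him := (Complex.abs_im_le_norm _).trans h
  simp only [Complex.sub_re, Complex.add_re, Complex.mul_re, Complex.ofReal_re, Complex.ofReal_im,
    Complex.I_re, Complex.I_im, mul_zero, mul_one, zero_mul, sub_zero, add_zero] at hre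
  simp only [Complex.sub_im, Complex.add_im, Complex.mul_im, Complex.ofReal_re, Complex.ofReal_im,
    Complex.I_re, Complex.I_im, mul_zero, mul_one, zero_mul, sub_zero, add_zero, zero_add] at him
  norm_num [Nat.factorial] at hre him
  rw [abs_le] at hre him
  constructor
  · rw [abs_le]; constructor <;> norm_num <;> linarith [hre.1, hre.2]
  · rw [abs_le]; constructor <;> norm_num <;> linarith [him.1, him.2]

lemma pw {x l u : ℝ} (hl : 0 ≤ l) (h1 : l ≤ x) (h2 : x ≤ u) (n : ℕ) : l^n ≤ x^n ∧ x^n ≤ u^n :=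
  ⟨pow_le_pow_left₀ hl h1 n, pow_le_pow_left₀ (hl.trans h1) h2 n⟩

lemma PP_bound : |PP (cos 0.7265697) - 0.7168168620| ≤ 2e-6 := by
  have h := trig_bound.1
  rw [abs_le] at h
  have hc1 : 0.7474575766 - 1e-8 ≤ cos 0.7265697 := by linarith [h.1]
  have hc2 : cos 0.7265697 ≤ 0.7474575766 + 1e-8 := by linarith [h.2]
  have p := pw (by norm_num) hc1 hc2
  have p2 := p 2
  have p3 := p 3
  have p4 := p 4
  have p5 := p 5
  have p6 := p 6
  unfold PP
  generalize cos 0.7265697 = c at *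
  norm_num at *
  rw [abs_le]
  constructor <;> linarith [p2.1, p3.1, p4.1, p5.1, p6.1, p2.2, p3.2, p4.2, p5.2, p6.2]

lemma PD_bound : |PD (cos 0.7265697) - 0.8935853388| ≤ 3e-6 := by
  have h := trig_bound.1
  rw [abs_le] at h
  have hc1 : 0.7474575766 - 1e-8 ≤ cos 0.7265697 := by linarith [h.1]
  have hc2 : cos 0.7265697 ≤ 0.7474575766 + 1e-8 := by linarith [h.2]
  have p := pw (by norm_num) hc1 hc2
  have p2 := p 2
  have p3 := p 3
  have p4 := p 4
  have p5 := p 5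
  unfold PD
  generalize cos 0.7265697 = c at *
  norm_num at *
  rw [abs_le]
  constructor <;> linarith [p2.1, p3.1, p4.1, p5.1, p2.2, p3.2, p4.2, p5.2]

lemma FD_bound : |FD 0.7265697| ≤ 8e-6 := by
  have h := trig_bound.2
  have hD := PD_bound
  have h1 := pi_gt_d20
  have h2 := pi_lt_d20
  unfold FD
  generalize PD (cos 0.7265697) = d at *
  generalize sin 0.7265697 = s at *
  rw [abs_le] at *
  have e1 : d * s ≤ (0.8935853388 + 3e-6) * (0.6643095448 + 1e-8) := by
    apply mul_le_mul <;> norm_num at * <;> linarith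
  have e2 : (0.8935853388 - 3e-6) * (0.6643095448 - 1e-8) ≤ d * s := by
    apply mul_le_mul <;> norm_num at * <;> linarith
  constructor <;> norm_num at * <;> linarith

lemma FF_bound : 1e-5 ≤ FF 0.7265697 := by
  have h := abs_le.1 PP_bound
  have h1 := pi_gt_d20
  have h2 := pi_lt_d20
  have : (π - 0.7265697)^2 ≤ (3.14159265358979323847 - 0.7265697)^2 := by
    apply pow_le_pow_left₀ <;> norm_num at * <;> linarith
  unfold FF
  norm_num at *
  linarith [h.1]

lemma upper : PP (cos 0.7265697) < 0.1229999 * (0.7265697 - π)^2 := by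
  have h := abs_le.1 PP_bound
  have h1 := pi_gt_d20
  have : (3.1415926535 - 0.7265697)^2 ≤ (π - 0.7265697)^2 := by
    apply pow_le_pow_left₀ <;> norm_num at * <;> linarith
  have e : (0.7265697 - π)^2 = (π - 0.7265697)^2 := by ring
  rw [e]
  norm_num at *
  linarith [h.2]

lemma FF_local {t : ℝ} (ht : t ∈ Set.Icc (arccos (17/20)) (arccos (3/5))) : 0 ≤ FF t := by
  have hc := abs_le.1 trig_bound.1
  have hpi := pi_gt_d2
  have hpi2 := pi_lt_d2
  have hmem : (0.7265697:ℝ) ∈ Set.Icc (arccos (17/20)) (arccos (3/5)) := by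
    have e : (0.7265697:ℝ) = arccos (cos 0.7265697) :=
      (arccos_cos (by norm_num) (by norm_num at *; linarith)).symm
    constructor
    · rw [e]; apply arccos_le_arccos; norm_num at *; linarith [hc.2]
    · conv_lhs => rw [e]
      apply arccos_le_arccos; norm_num at *; linarith [hc.1]
  have t0 : 0 ≤ t := (arccos_nonneg _).trans ht.1
  have t1 : t ≤ π/2 := ht.2.trans (arccos_le_pi_div_two.2 (by norm_num))
  have hF := FF_bound
  have hD := abs_le.1 FD_bound
  have key : FF 0.7265697 + FD 0.7265697 * (t - 0.7265697) ≤ FF t := by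
    rcases lt_trichotomy t 0.7265697 with h | h | h
    · have := FF_convex.slope_le_of_hasDerivAt ht hmem h (FF_hasDeriv _)
      rw [slope_def_field, div_le_iff₀ (by linarith)] at this
      linarith
    · rw [h]; simp
    · have := FF_convex.le_slope_of_hasDerivAt hmem ht h (FF_hasDeriv _)
      rw [slope_def_field, le_div_iff₀ (by linarith)] at this
      linarith
  have habs : |FD 0.7265697 * (t - 0.7265697)| ≤ 8e-6 * 1 := by
    rw [abs_mul]
    apply mul_le_mul FD_bound _ (abs_nonneg _) (by norm_num)
    rw [abs_le]; constructor <;> norm_num at * <;> linarith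
  have := (abs_le.1 habs).1
  norm_num at *
  linarith

lemma FF_nonneg {t : ℝ} (h0 : 0 ≤ t) (h1 : t < π) : 0 ≤ FF t := by
  have hpi := pi_gt_d6
  have hpi2 := pi_lt_d6
  have hpisq : 0.122901 * (π/2)^2 ≤ 0.3034 := by norm_num at *; nlinarith
  by_cases hc : cos t ≤ 0
  · have ht : π/2 ≤ t := by
      by_contra h
      push Not at h
      have := cos_pos_of_mem_Ioo ⟨by linarith, h⟩
      linarith
    have hj := mul_le_sin (x := π - t) (by linarith) (by linarith)
    rw [sin_pi_sub] at hj
    have hs : π - t ≤ π/2 * sin t := by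
      have := mul_le_mul_of_nonneg_left hj (by positivity : 0 ≤ π/2)
      have e : π/2 * (2/π * (π - t)) = π - t := by field_simp
      linarith
    have hs2 : (π - t)^2 ≤ (π/2)^2 * (1 - cos t^2) := by
      rw [← sin_sq, ← mul_pow]
      exact pow_le_pow_left₀ (by linarith) hs 2
    have hP : 0.3034 * (1 - cos t^2) ≤ PP (cos t) := by
      rcases le_total (cos t) (-3/4) with h | h
      · exact polyA1 (neg_one_le_cos t) h
      rcases le_total (cos t) (-1/2) with h' | h'
      · exact polyA2 h h'
      · exact polyA3 h' hc
    have hn : 0 ≤ 1 - cos t^2 := by rw [← sin_sq]; positivity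
    have := mul_le_mul_of_nonneg_right hpisq hn
    unfold FF
    norm_num at *
    linarith
  push Not at hc
  have ht : t ≤ π/2 := by
    by_contra h
    push Not at h
    have := cos_neg_of_pi_div_two_lt_of_lt h (by linarith)
    linarith
  by_cases hl : 3/5 ≤ cos t ∧ cos t ≤ 17/20
  · apply FF_local
    have e : t = arccos (cos t) := (arccos_cos h0 h1.le).symm
    constructor
    · rw [e]; exact arccos_le_arccos hl.2
    · conv_lhs => rw [e]
      exact arccos_le_arccos hl.1
  have hP : 0.3034 * (1 + cos t)^2 ≤ PP (cos t) := by
    by_cases h : 3/5 ≤ cos t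
    · have h' : ¬ cos t ≤ 17/20 := fun h' => hl ⟨h, h'⟩
      push Not at h'
      exact polyB2 h'.le (cos_le_one t)
    · push Not at h
      exact polyB1 hc.le h.le
  have hj := mul_le_sin (x := π/2 - t) (by linarith) (by linarith)
  rw [sin_pi_div_two_sub] at hj
  have hs : π - t ≤ π/2 * (1 + cos t) := by
    have := mul_le_mul_of_nonneg_left hj (by positivity : 0 ≤ π/2)
    have e : π/2 * (2/π * (π/2 - t)) = π/2 - t := by field_simp
    linarith
  have hs2 : (π - t)^2 ≤ (π/2)^2 * (1 + cos t)^2 := by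
    rw [← mul_pow]
    exact pow_le_pow_left₀ (by linarith) hs 2
  have := mul_le_mul_of_nonneg_right hpisq (sq_nonneg (1 + cos t))
  unfold FF
  norm_num at *
  linarith

theorem alpha_bounds : 0.1229 < α ∧ α < 0.123 := by
  have hpi := pi_gt_d6
  have key : ∀ y ∈ ((fun t => T6 t / (t - π)^2) '' Set.Ico 0 π), 0.122901 ≤ y := by
    rintro y ⟨t, ht, rfl⟩
    have hpos : 0 < (t - π)^2 := by
      have : t - π ≠ 0 := by linarith [ht.2]
      positivity
    have h := FF_nonneg ht.1 ht.2
    unfold FF at h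
    show (0.122901:ℝ) ≤ T6 t / (t - π)^2
    rw [le_div_iff₀ hpos, T6_eq]
    have e : (t - π)^2 = (π - t)^2 := by ring
    rw [e]
    linarith
  have hm : (0.7265697:ℝ) ∈ Set.Ico 0 π := ⟨by norm_num, by norm_num at *; linarith⟩
  constructor
  · have : (0.122901:ℝ) ≤ α := le_csInf ⟨_, Set.mem_image_of_mem _ hm⟩ key
    norm_num at *
    linarith
  · have h1 : α ≤ T6 0.7265697 / (0.7265697 - π)^2 :=
      csInf_le ⟨_, key⟩ (Set.mem_image_of_mem _ hm)
    have hpos : 0 < ((0.7265697:ℝ) - π)^2 := by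
      have : (0.7265697:ℝ) - π ≠ 0 := by linarith [hm.2]
      positivity
    have h2 : T6 0.7265697 / (0.7265697 - π)^2 < 0.1229999 := by
      rw [div_lt_iff₀ hpos, T6_eq]
      exact upper
    norm_num at *
    linarith
end
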